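/- arXiv:2111.10328 — 14 statements merged into one kernel-verified Lean document; each statement's English description precedes it below -/
import Mathlib

section
/- For any four points z₁, z₂, z₃, z₄ in the hyperbolic plane, writing d_ij for the hyperbolic distance between z_i and z_j, one has sinh(d₁₃/2)·sinh(d₂₄/2) ≤ sinh(d₁₂/2)·sinh(d₃₄/2) + sinh(d₂₃/2)·sinh(d₁₄/2). (This is the κ = −1 case of the κ-Ptolemy inequality in the model space of constant curvature κ.) -/
/-- Hyperbolic Ptolemy inequality (κ = −1 case of the κ-Ptolemy inequality) in the
upper half-plane model of the hyperbolic plane. -/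
theorem hyperbolic_ptolemy (z₁ z₂ z₃ z₄ : UpperHalfPlane) :
    Real.sinh (dist z₁ z₃ / 2) * Real.sinh (dist z₂ z₄ / 2) ≤
      Real.sinh (dist z₁ z₂ / 2) * Real.sinh (dist z₃ z₄ / 2) +
        Real.sinh (dist z₂ z₃ / 2) * Real.sinh (dist z₁ z₄ / 2) := by
  have h := EuclideanGeometry.mul_dist_le_mul_dist_add_mul_dist (z₁ : ℂ) z₂ z₃ z₄
  have p1 := Real.sqrt_pos.2 z₁.im_pos
  have p2 := Real.sqrt_pos.2 z₂.im_pos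
  have p3 := Real.sqrt_pos.2 z₃.im_pos
  have p4 := Real.sqrt_pos.2 z₄.im_pos
  simp only [UpperHalfPlane.sinh_half_dist, Real.sqrt_mul z₁.im_pos.le,
    Real.sqrt_mul z₂.im_pos.le, Real.sqrt_mul z₃.im_pos.le]
  generalize √z₁.im = a at *
  generalize √z₂.im = b at *
  generalize √z₃.im = c at *
  generalize √z₄.im = d at *
  have h2 := div_le_div_of_nonneg_right h (by positivity : 0 ≤ 4 * (a * b * c * d))
  rw [add_div] at h2
  rw [div_mul_div_comm, div_mul_div_comm, div_mul_div_comm,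
    show 2 * (a * c) * (2 * (b * d)) = 4 * (a * b * c * d) by ring,
    show 2 * (a * b) * (2 * (c * d)) = 4 * (a * b * c * d) by ring,
    show 2 * (b * c) * (2 * (a * d)) = 4 * (a * b * c * d) by ring]
  exact h2
end

section
/- Let p₁, p₂, p₃, p₄ be unit vectors in a real inner product space, and set d_ij = arccos⟪p_i, p_j⟫ (the spherical geodesic distance between p_i and p_j on the unit sphere). Then sin(d₁₃/2)·sin(d₂₄/2) ≤ sin(d₁₂/2)·sin(d₃₄/2) + sin(d₂₃/2)·sin(d₁₄/2). (This is the κ = 1 case of the κ-Ptolemy inequality; note it holds with no restriction on the perimeter d₁₂ + d₂₃ + d₃₄ + d₄₁.) -/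
open RealInnerProductSpace

/-- Half the chord length is the sine of half the spherical distance. -/
lemma sin_half_arccos_inner {E : Type*} [NormedAddCommGroup E] [InnerProductSpace ℝ E]
    (x y : E) (hx : ‖x‖ = 1) (hy : ‖y‖ = 1) :
    Real.sin (Real.arccos ⟪x, y⟫ / 2) = dist x y / 2 := by
  have hb := abs_le.1 (abs_real_inner_le_norm x y)
  rw [hx, hy, mul_one] at hb
  have h0 := Real.arccos_nonneg ⟪x, y⟫
  have hpi := Real.arccos_le_pi ⟪x, y⟫
  rw [Real.sin_half_eq_sqrt h0 (by linarith [Real.pi_pos]), Real.cos_arccos hb.1 hb.2]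
  have hd := norm_sub_sq_real x y
  rw [hx, hy] at hd
  rw [dist_eq_norm, Real.sqrt_eq_iff_mul_self_eq (by linarith [hb.2]) (by positivity)]
  nlinarith

/-- Spherical Ptolemy inequality (κ = 1 case of the κ-Ptolemy inequality) for unit
vectors in a real inner product space, with the spherical geodesic distance
`d i j = arccos ⟪p i, p j⟫`. -/
theorem spherical_ptolemy {E : Type*} [NormedAddCommGroup E] [InnerProductSpace ℝ E]
    (p₁ p₂ p₃ p₄ : E) (h₁ : ‖p₁‖ = 1) (h₂ : ‖p₂‖ = 1) (h₃ : ‖p₃‖ = 1) (h₄ : ‖p₄‖ = 1) :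
    Real.sin (Real.arccos ⟪p₁, p₃⟫ / 2) * Real.sin (Real.arccos ⟪p₂, p₄⟫ / 2) ≤
      Real.sin (Real.arccos ⟪p₁, p₂⟫ / 2) * Real.sin (Real.arccos ⟪p₃, p₄⟫ / 2) +
        Real.sin (Real.arccos ⟪p₂, p₃⟫ / 2) * Real.sin (Real.arccos ⟪p₁, p₄⟫ / 2) := by
  rw [sin_half_arccos_inner _ _ h₁ h₃, sin_half_arccos_inner _ _ h₂ h₄,
    sin_half_arccos_inner _ _ h₁ h₂, sin_half_arccos_inner _ _ h₃ h₄,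
    sin_half_arccos_inner _ _ h₂ h₃, sin_half_arccos_inner _ _ h₁ h₄]
  have h := EuclideanGeometry.mul_dist_le_mul_dist_add_mul_dist p₁ p₂ p₃ p₄
  linarith
end

section
/- For any real number r with 0 < r ≤ 1 and any four points z₁, z₂, z₃, z₄ in the hyperbolic plane, writing d_ij for the hyperbolic distance between z_i and z_j, one has sinh(r·d₁₃/2)·sinh(r·d₂₄/2) ≤ sinh(r·d₁₂/2)·sinh(r·d₃₄/2) + sinh(r·d₂₃/2)·sinh(r·d₁₄/2). (This is the κ-Ptolemy inequality for κ = −r², valid because the hyperbolic plane is CAT(κ) for every κ ≥ −1.) -/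
namespace KPtolemy

open Real

/-- `x * tanh x`. -/
noncomputable def T (x : ℝ) : ℝ := x * (sinh x / cosh x)

/-- `x * coth x`, with value `1` at `0`. -/
noncomputable def K (x : ℝ) : ℝ := if x = 0 then 1 else x * cosh x / sinh x

lemma K_zero : K 0 = 1 := by simp [K]

lemma K_of_pos {x : ℝ} (hx : 0 < x) : K x = x * cosh x / sinh x := by
  simp [K, hx.ne']

lemma T_zero : T 0 = 0 := by simp [T]

lemma K_mul_sinh (x : ℝ) : K x * sinh x = x * cosh x := by
  by_cases h : x = 0
  · simp [h]
  · have : sinh x ≠ 0 := by simpa using h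
    simp only [K, h, if_false]
    field_simp

lemma T_mul_cosh (x : ℝ) : T x * cosh x = x * sinh x := by
  have := (cosh_pos x).ne'
  unfold T
  field_simp

lemma sinh_le_mul_cosh {x : ℝ} (hx : 0 ≤ x) : sinh x ≤ x * cosh x := by
  have h : MonotoneOn (fun x : ℝ => x * cosh x - sinh x) (Set.Ici 0) := by
    apply monotoneOn_of_deriv_nonneg (convex_Ici 0)
    · fun_prop
    · fun_prop
    · intro y hy
      rw [interior_Ici] at hy
      have hd : HasDerivAt (fun x : ℝ => x * cosh x - sinh x)
          (1 * cosh y + y * sinh y - cosh y) y :=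
        ((hasDerivAt_id y).mul (hasDerivAt_cosh y)).sub (hasDerivAt_sinh y)
      rw [hd.deriv]
      have : 0 < sinh y := sinh_pos_iff.2 hy
      have hy' : 0 < y := hy
      nlinarith [mul_pos hy' this]
  have := h (Set.mem_Ici.2 le_rfl) (Set.mem_Ici.2 hx) hx
  simp at this
  linarith

lemma one_le_K {x : ℝ} (hx : 0 ≤ x) : 1 ≤ K x := by
  rcases hx.eq_or_lt with h | h
  · rw [← h, K_zero]
  · rw [K_of_pos h, le_div_iff₀ (sinh_pos_iff.2 h), one_mul]
    exact sinh_le_mul_cosh hx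

lemma K_convex : ConvexOn ℝ (Set.Ioi 0) (fun x : ℝ => x * cosh x / sinh x) := by
  have hd : ∀ y ∈ Set.Ioi (0:ℝ), HasDerivAt (fun x : ℝ => x * cosh x / sinh x)
      ((sinh y * cosh y - y) / sinh y ^ 2) y := by
    intro y hy
    have hs : sinh y ≠ 0 := (sinh_pos_iff.2 hy).ne'
    have := ((hasDerivAt_id y).mul (hasDerivAt_cosh y)).div (hasDerivAt_sinh y) hs
    refine this.congr_deriv ?_
    simp only [id, Pi.mul_apply]
    congr 1
    linear_combination (-y) * cosh_sq y
  have hd2 : ∀ y ∈ Set.Ioi (0:ℝ), HasDerivAt (fun y : ℝ => (sinh y * cosh y - y) / sinh y ^ 2)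
      (2 * (y * cosh y - sinh y) / sinh y ^ 3) y := by
    intro y hy
    have hs : sinh y ≠ 0 := (sinh_pos_iff.2 hy).ne'
    have := (((hasDerivAt_sinh y).mul (hasDerivAt_cosh y)).sub (hasDerivAt_id y)).div
      ((hasDerivAt_sinh y).pow 2) (pow_ne_zero 2 hs)
    refine this.congr_deriv ?_
    simp only [id, Pi.mul_apply, Pi.sub_apply, Pi.pow_apply]
    have hc := cosh_sq y
    rw [div_eq_div_iff (by positivity) (by positivity)]
    push_cast
    ring_nf
    have h3 : cosh y ^ 2 = sinh y ^ 2 + 1 := hc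
    rw [h3]
    ring
  apply MonotoneOn.convexOn_of_deriv (convex_Ioi 0)
  · exact fun y hy => (hd y hy).continuousAt.continuousWithinAt
  · rw [interior_Ioi]
    exact fun y hy => (hd y hy).differentiableAt.differentiableWithinAt
  · rw [interior_Ioi]
    have hm : MonotoneOn (fun y : ℝ => (sinh y * cosh y - y) / sinh y ^ 2) (Set.Ioi 0) := by
      apply monotoneOn_of_deriv_nonneg (convex_Ioi 0)
      · exact fun y hy => (hd2 y hy).continuousAt.continuousWithinAt
      · rw [interior_Ioi]
        exact fun y hy => (hd2 y hy).differentiableAt.differentiableWithinAt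
      · rw [interior_Ioi]
        intro y hy
        rw [(hd2 y hy).deriv]
        have h1 := sinh_le_mul_cosh (le_of_lt hy)
        have h2 : 0 < sinh y := sinh_pos_iff.2 hy
        apply div_nonneg _ (by positivity)
        linarith
    exact hm.congr fun y hy => ((hd y hy).deriv).symm

/-- `K(x) + K(y) ≤ 1 + K(x+y)`. -/
lemma K_superadd {x y : ℝ} (hx : 0 ≤ x) (hy : 0 ≤ y) : K x + K y ≤ 1 + K (x + y) := by
  rcases hx.eq_or_lt with h | hx'
  · rw [← h, K_zero, zero_add]
  rcases hy.eq_or_lt with h | hy'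
  · rw [← h, K_zero, add_zero, add_comm]
  have hsx : 0 < sinh x := sinh_pos_iff.2 hx'
  have hsy : 0 < sinh y := sinh_pos_iff.2 hy'
  have hsxy : 0 < sinh (x + y) := sinh_pos_iff.2 (by linarith)
  have ex := self_le_sinh_iff.2 hx
  have ey := self_le_sinh_iff.2 hy
  have key : x * sinh y ^ 2 + y * sinh x ^ 2 ≤ sinh x * sinh y * sinh (x + y) := by
    rw [sinh_add]
    have h1 : x ≤ sinh x * cosh x := by nlinarith [one_le_cosh x]
    have h2 : y ≤ sinh y * cosh y := by nlinarith [one_le_cosh y]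
    nlinarith [mul_le_mul_of_nonneg_right h1 (sq_nonneg (sinh y)),
      mul_le_mul_of_nonneg_right h2 (sq_nonneg (sinh x))]
  have hid : K x + K y - K (x + y)
      = (x * sinh y ^ 2 + y * sinh x ^ 2) / (sinh x * sinh y * sinh (x + y)) := by
    rw [K_of_pos hx', K_of_pos hy', K_of_pos (by linarith)]
    field_simp
    rw [sinh_add, cosh_add]
    have h1 := cosh_sq x
    have h2 := cosh_sq y
    linear_combination (x * sinh y ^ 2) * h1 + (y * sinh x ^ 2) * h2
  have : K x + K y - K (x + y) ≤ 1 := by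
    rw [hid, div_le_one (by positivity)]
    exact key
  linarith

lemma K_mono {x y : ℝ} (hx : 0 ≤ x) (hxy : x ≤ y) : K x ≤ K y := by
  have h := K_superadd hx (sub_nonneg.2 hxy)
  have h1 := one_le_K (sub_nonneg.2 hxy)
  rw [add_sub_cancel] at h
  linarith

/-- weak majorization for `K`, ordered version -/
lemma K_major_aux {a b c e : ℝ} (hb : 0 < b) (he : 0 < e) (hec : e ≤ c) (hca : c ≤ a)
    (hs : c + e ≤ a + b) : K c + K e ≤ K a + K b := by
  rcases le_total e b with h | h
  · have := K_mono he.le h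
    have := K_mono (he.le.trans hec) hca
    linarith
  have h1 : K e ≤ K (a + b - c) := K_mono he.le (by linarith)
  have h2 : K c + K (a + b - c) ≤ K a + K b := by
    rcases (show b ≤ a by linarith).eq_or_lt with hab | hab
    · have : c = a := by linarith
      subst this
      simp
    have hpos : 0 < a - b := by linarith
    have hA : a ∈ Set.Ioi (0:ℝ) := by simp only [Set.mem_Ioi]; linarith
    have hB : b ∈ Set.Ioi (0:ℝ) := hb
    set s := (c - b) / (a - b) with hs_def
    have hs0 : 0 ≤ s := div_nonneg (by linarith) hpos.le
    have hs1 : s ≤ 1 := by rw [hs_def, div_le_one hpos]; linarith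
    have hsm : s * (a - b) = c - b := div_mul_cancel₀ _ hpos.ne'
    have c1 := K_convex.2 hA hB hs0 (by linarith : 0 ≤ 1 - s) (by ring)
    have c2 := K_convex.2 hA hB (by linarith : 0 ≤ 1 - s) hs0 (by ring)
    simp only [smul_eq_mul] at c1 c2
    rw [show s * a + (1 - s) * b = c by linarith] at c1
    rw [show (1 - s) * a + s * b = a + b - c by linarith] at c2
    rw [K_of_pos (show 0 < c by linarith), K_of_pos (show 0 < a + b - c by linarith),
      K_of_pos (show 0 < a by linarith), K_of_pos hb]
    linarith
  linarith

/-- weak majorization for `K` -/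
lemma K_major {a b c e : ℝ} (ha : 0 < a) (hb : 0 < b) (hc : 0 < c) (he : 0 < e)
    (h1 : c ≤ max a b) (h2 : e ≤ max a b)
    (hs : c + e ≤ a + b) : K c + K e ≤ K a + K b := by
  rcases le_total a b with h | h <;> rcases le_total c e with h' | h' <;>
    simp only [h, max_eq_left, max_eq_right] at h1 h2
  · linarith [K_major_aux ha hc h' h2 (by linarith)]
  · linarith [K_major_aux ha he h' h1 (by linarith)]
  · linarith [K_major_aux hb hc h' h2 (by linarith)]
  · linarith [K_major_aux hb he h' h1 (by linarith)]

lemma K_two_mul {x : ℝ} (hx : 0 < x) : K (2 * x) = K x + T x := by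
  have h1 : 0 < sinh x := sinh_pos_iff.2 hx
  have h2 := cosh_pos x
  rw [K_of_pos hx, K_of_pos (by linarith), T, sinh_two_mul, cosh_two_mul]
  field_simp

lemma K_add_le {w q : ℝ} (hw : 0 < w) (hq : w ≤ q) : K (w + q) ≤ T q + K w := by
  have hq' : 0 < q := by linarith
  have := K_major (a := 2 * q) (b := w) (c := w + q) (e := q) (by linarith) hw (by linarith) hq'
    (le_max_of_le_left (by linarith)) (le_max_of_le_left (by linarith)) (by linarith)
  rw [K_two_mul hq'] at this
  linarith

lemma tanh_mono {x y : ℝ} (h : x ≤ y) : sinh x / cosh x ≤ sinh y / cosh y := by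
  rw [div_le_div_iff₀ (cosh_pos x) (cosh_pos y)]
  have : 0 ≤ sinh (y - x) := sinh_nonneg_iff.2 (by linarith)
  rw [sinh_sub] at this
  linarith

lemma T_superadd {x y : ℝ} (hx : 0 ≤ x) (hy : 0 ≤ y) : T x + T y ≤ T (x + y) := by
  unfold T
  have h1 := mul_le_mul_of_nonneg_left (tanh_mono (show x ≤ x + y by linarith)) hx
  have h2 := mul_le_mul_of_nonneg_left (tanh_mono (show y ≤ x + y by linarith)) hy
  linarith

lemma T_nonneg {x : ℝ} (hx : 0 ≤ x) : 0 ≤ T x :=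
  mul_nonneg hx (div_nonneg (sinh_nonneg_iff.2 hx) (cosh_pos x).le)

lemma T_mono {x y : ℝ} (hx : 0 ≤ x) (hxy : x ≤ y) : T x ≤ T y := by
  have h := T_superadd hx (sub_nonneg.2 hxy)
  have h1 := T_nonneg (sub_nonneg.2 hxy)
  rw [add_sub_cancel] at h
  linarith

/-- `K - T` is antitone. -/
lemma K_T_swap {x y : ℝ} (hx : 0 ≤ x) (hxy : x ≤ y) : K y + T x ≤ T y + K x := by
  have e : ∀ z : ℝ, 0 < z → K z - T z = z / (sinh z * cosh z) := by
    intro z hz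
    have h1 : 0 < sinh z := sinh_pos_iff.2 hz
    have h2 := cosh_pos z
    rw [K_of_pos hz, T]
    field_simp
    rw [cosh_sq]; ring
  rcases hxy.eq_or_lt with h | hlt
  · rw [h, add_comm]
  have hy : 0 < y := by linarith
  have hsy : 0 < sinh y := sinh_pos_iff.2 hy
  rcases hx.eq_or_lt with h | hx'
  · rw [← h, K_zero, T_zero]
    have := e y hy
    have h3 : y / (sinh y * cosh y) ≤ 1 := by
      rw [div_le_one (mul_pos hsy (cosh_pos y))]
      nlinarith [one_le_cosh y, self_le_sinh_iff.2 hy.le]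
    linarith
  have hsx : 0 < sinh x := sinh_pos_iff.2 hx'
  have hanti : AntitoneOn (fun z : ℝ => z / (sinh z * cosh z)) (Set.Ioi 0) := by
    have hd : ∀ z ∈ Set.Ioi (0:ℝ), HasDerivAt (fun z : ℝ => z / (sinh z * cosh z))
        ((1 * (sinh z * cosh z) - z * (cosh z * cosh z + sinh z * sinh z)) /
          (sinh z * cosh z) ^ 2) z := by
      intro z hz
      exact (hasDerivAt_id z).div ((hasDerivAt_sinh z).mul (hasDerivAt_cosh z))
        (mul_pos (sinh_pos_iff.2 hz) (cosh_pos z)).ne'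
    apply antitoneOn_of_deriv_nonpos (convex_Ioi 0)
    · exact fun y hy => (hd y hy).continuousAt.continuousWithinAt
    · rw [interior_Ioi]
      exact fun y hy => (hd y hy).differentiableAt.differentiableWithinAt
    · rw [interior_Ioi]
      intro z hz
      rw [(hd z hz).deriv]
      apply div_nonpos_of_nonpos_of_nonneg _ (sq_nonneg _)
      have hz' : 0 < z := hz
      have h1 := sinh_le_mul_cosh hz'.le
      nlinarith [cosh_pos z, mul_nonneg hz'.le (sq_nonneg (sinh z)),
        mul_le_mul_of_nonneg_right h1 (cosh_pos z).le]
  have := hanti (Set.mem_Ioi.2 hx') (Set.mem_Ioi.2 hy) hxy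
  simp only at this
  rw [← e x hx', ← e y hy] at this
  linarith

/-- The basic product `cosh (r x) sinh (r y) sinh (r z)`. -/
noncomputable def M (x y z r : ℝ) : ℝ := cosh (r * x) * sinh (r * y) * sinh (r * z)

lemma M_nonneg {x y z r : ℝ} (hy : 0 ≤ y) (hz : 0 ≤ z) (hr : 0 ≤ r) : 0 ≤ M x y z r :=
  mul_nonneg (mul_nonneg (cosh_pos _).le (sinh_nonneg_iff.2 (by positivity)))
    (sinh_nonneg_iff.2 (by positivity))

lemma M_pos {x y z r : ℝ} (hy : 0 < y) (hz : 0 < z) (hr : 0 < r) : 0 < M x y z r :=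
  mul_pos (mul_pos (cosh_pos _) (sinh_pos_iff.2 (by positivity)))
    (sinh_pos_iff.2 (by positivity))

lemma M_deriv (x y z r : ℝ) : ∃ d, HasDerivAt (M x y z) d r ∧
    r * d = (T (r * x) + K (r * y) + K (r * z)) * M x y z r := by
  have hx : ∀ x : ℝ, HasDerivAt (fun r : ℝ => r * x) x r := fun x => by
    simpa using (hasDerivAt_id r).mul_const x
  refine ⟨_, (((hx x).cosh.mul (hx y).sinh).mul (hx z).sinh), ?_⟩
  have h1 := T_mul_cosh (r * x)
  have h2 := K_mul_sinh (r * y)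
  have h3 := K_mul_sinh (r * z)
  simp only [M, Pi.mul_apply]
  linear_combination (-(sinh (r * y) * sinh (r * z))) * h1 - (cosh (r * x) * sinh (r * z)) * h2
    - (cosh (r * x) * sinh (r * y)) * h3

lemma M_compare {x y z x' y' z' : ℝ} (hy : 0 ≤ y) (hz : 0 ≤ z) (hy' : 0 < y') (hz' : 0 < z')
    (h : ∀ r : ℝ, 0 < r → T (r * x) + K (r * y) + K (r * z)
      ≤ T (r * x') + K (r * y') + K (r * z'))
    {r : ℝ} (hr0 : 0 < r) (hr1 : r ≤ 1) :
    M x y z 1 * M x' y' z' r ≤ M x y z r * M x' y' z' 1 := by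
  have hanti : AntitoneOn (fun r => M x y z r / M x' y' z' r) (Set.Ioi 0) := by
    have hd : ∀ s ∈ Set.Ioi (0:ℝ), ∃ d, HasDerivAt (fun r => M x y z r / M x' y' z' r) d s
        ∧ d ≤ 0 := by
      intro s hs
      have hs' : 0 < s := hs
      obtain ⟨d1, hd1, e1⟩ := M_deriv x y z s
      obtain ⟨d2, hd2, e2⟩ := M_deriv x' y' z' s
      have hp := M_pos (x := x') hy' hz' hs'
      have hn := M_nonneg (x := x) hy hz hs'.le
      refine ⟨_, hd1.div hd2 hp.ne', ?_⟩
      apply div_nonpos_of_nonpos_of_nonneg _ (sq_nonneg _)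
      have key : s * (d1 * M x' y' z' s - M x y z s * d2) ≤ 0 := by
        have := mul_le_mul_of_nonneg_right (h s hs') (mul_nonneg hn hp.le)
        linear_combination this + M x' y' z' s * e1 - M x y z s * e2
      by_contra hcon
      push Not at hcon
      have := mul_pos hs' hcon
      linarith
    apply antitoneOn_of_deriv_nonpos (convex_Ioi 0)
    · intro s hs
      obtain ⟨d, hd, -⟩ := hd s hs
      exact hd.continuousAt.continuousWithinAt
    · rw [interior_Ioi]
      intro s hs
      obtain ⟨d, hd, -⟩ := hd s hs
      exact hd.differentiableAt.differentiableWithinAt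
    · rw [interior_Ioi]
      intro s hs
      obtain ⟨d, hd, hn⟩ := hd s hs
      rw [hd.deriv]
      exact hn
  have := hanti (Set.mem_Ioi.2 hr0) (Set.mem_Ioi.2 one_pos) hr1
  simp only at this
  rwa [div_le_div_iff₀ (M_pos hy' hz' one_pos) (M_pos hy' hz' hr0)] at this

/-- The numerator in the main case. -/
noncomputable def N (P Q u v r : ℝ) : ℝ :=
  cosh (r * P) * sinh (r * Q) * sinh (r * u) * cosh (r * v)
    + sinh (r * P) * cosh (r * Q) * cosh (r * u) * sinh (r * v)

lemma N_symm (P Q u v r : ℝ) : N P Q u v r = N Q P v u r := by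
  unfold N; ring

/-- Main comparison, case `P ≥ Q`, `u ≥ v`. -/
lemma N_compare_beta {P Q u v w e R : ℝ} (hv : 0 ≤ v) (hw : 0 < w)
    (hP : 2 * w + u ≤ P) (hQ : 2 * w + v ≤ Q) (he : 0 < e) (hue : u + v ≤ e)
    (hR : P + Q - w ≤ R) (hPQ : Q ≤ P) (huv : v ≤ u) {r : ℝ} (hr0 : 0 < r) (hr1 : r ≤ 1) :
    N P Q u v 1 * M R w e r ≤ N P Q u v r * M R w e 1 := by
  have hN : ∀ r, N P Q u v r = M P Q (u + v) r + M u (P - Q) v r := by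
    intro r
    simp only [N, M, mul_add, mul_sub, sinh_add, sinh_sub]
    ring
  rw [hN, hN, add_mul, add_mul]
  apply add_le_add
  · apply M_compare (by linarith) (by linarith) hw he _ hr0 hr1
    intro s hs
    have h1 : K (s * (u + v)) ≤ K (s * e) :=
      K_mono (mul_nonneg hs.le (by linarith)) (mul_le_mul_of_nonneg_left hue hs.le)
    have h2 := K_add_le (w := s * w) (q := s * (Q - w)) (mul_pos hs hw)
      (mul_le_mul_of_nonneg_left (by linarith) hs.le)
    rw [show s * w + s * (Q - w) = s * Q by ring] at h2
    have h3 := T_superadd (x := s * P) (y := s * (Q - w)) (mul_nonneg hs.le (by linarith))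
      (mul_nonneg hs.le (by linarith))
    have h4 : T (s * P + s * (Q - w)) ≤ T (s * R) := by
      apply T_mono
      · rw [← mul_add]; exact mul_nonneg hs.le (by linarith)
      · rw [← mul_add]; exact mul_le_mul_of_nonneg_left (by linarith) hs.le
    linarith
  · apply M_compare (by linarith) hv hw he _ hr0 hr1
    intro s hs
    have h1 : K (s * (u + v)) ≤ K (s * e) :=
      K_mono (mul_nonneg hs.le (by linarith)) (mul_le_mul_of_nonneg_left hue hs.le)
    have h2 := K_superadd (x := s * u) (y := s * v) (mul_nonneg hs.le (by linarith))
      (mul_nonneg hs.le (by linarith))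
    rw [← mul_add] at h2
    have h3 : 1 ≤ K (s * w) := one_le_K (mul_nonneg hs.le (by linarith))
    rcases le_total u (P - Q) with h | h
    · have h4 := K_T_swap (x := s * u) (y := s * (P - Q)) (mul_nonneg hs.le (by linarith))
        (mul_le_mul_of_nonneg_left h hs.le)
      have h5 : T (s * (P - Q)) ≤ T (s * R) :=
        T_mono (mul_nonneg hs.le (by linarith)) (mul_le_mul_of_nonneg_left (by linarith) hs.le)
      linarith
    · have h4 : K (s * (P - Q)) ≤ K (s * u) :=
        K_mono (mul_nonneg hs.le (by linarith)) (mul_le_mul_of_nonneg_left h hs.le)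
      have h5 : T (s * u) ≤ T (s * R) :=
        T_mono (mul_nonneg hs.le (by linarith)) (mul_le_mul_of_nonneg_left (by linarith) hs.le)
      linarith

/-- Main comparison, case `P ≥ Q`, `u ≤ v`. -/
lemma N_compare_alpha {P Q u v w e R : ℝ} (hu : 0 ≤ u) (hw : 0 < w)
    (hP : 2 * w + u ≤ P) (hQ : 2 * w + v ≤ Q) (he : 0 < e) (hue : u + v ≤ e)
    (hR : P + Q - w ≤ R) (hPQ : Q ≤ P) (huv : u ≤ v) {r : ℝ} (hr0 : 0 < r) (hr1 : r ≤ 1) :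
    N P Q u v 1 * M R w e r ≤ N P Q u v r * M R w e 1 := by
  have hN : ∀ r, N P Q u v r = (M 0 (P + Q) (u + v) r + M 0 (P - Q) (v - u) r) / 2 := by
    intro r
    simp only [N, M, mul_add, mul_sub, sinh_add, sinh_sub, mul_zero, cosh_zero]
    ring
  have main : ∀ s : ℝ, 0 < s → T (s * 0) + K (s * (P + Q)) + K (s * (u + v))
      ≤ T (s * R) + K (s * w) + K (s * e) := by
    intro s hs
    have h1 : K (s * (u + v)) ≤ K (s * e) :=
      K_mono (mul_nonneg hs.le (by linarith)) (mul_le_mul_of_nonneg_left hue hs.le)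
    have h2 := K_add_le (w := s * w) (q := s * (P + Q - w)) (mul_pos hs hw)
      (mul_le_mul_of_nonneg_left (by linarith) hs.le)
    rw [show s * w + s * (P + Q - w) = s * (P + Q) by ring] at h2
    have h4 : T (s * (P + Q - w)) ≤ T (s * R) :=
      T_mono (mul_nonneg hs.le (by linarith)) (mul_le_mul_of_nonneg_left hR hs.le)
    rw [mul_zero, T_zero]
    linarith
  have c1 := M_compare (x := 0) (y := P + Q) (z := u + v) (by linarith) (by linarith) hw he main
    hr0 hr1
  have c2 : M 0 (P - Q) (v - u) 1 * M R w e r ≤ M 0 (P - Q) (v - u) r * M R w e 1 := by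
    apply M_compare (by linarith) (by linarith) hw he _ hr0 hr1
    intro s hs
    have h1 : K (s * (P - Q)) ≤ K (s * (P + Q)) :=
      K_mono (mul_nonneg hs.le (by linarith)) (mul_le_mul_of_nonneg_left (by linarith) hs.le)
    have h2 : K (s * (v - u)) ≤ K (s * (u + v)) :=
      K_mono (mul_nonneg hs.le (by linarith)) (mul_le_mul_of_nonneg_left (by linarith) hs.le)
    have := main s hs
    linarith
  rw [hN, hN]
  linarith

lemma N_compare {P Q u v w e R : ℝ} (hu : 0 ≤ u) (hv : 0 ≤ v) (hw : 0 < w)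
    (hP : 2 * w + u ≤ P) (hQ : 2 * w + v ≤ Q) (he : 0 < e) (hue : u + v ≤ e)
    (hR : P + Q - w ≤ R) {r : ℝ} (hr0 : 0 < r) (hr1 : r ≤ 1) :
    N P Q u v 1 * M R w e r ≤ N P Q u v r * M R w e 1 := by
  rcases le_total Q P with h | h <;> rcases le_total u v with huv | huv
  · exact N_compare_alpha hu hw hP hQ he hue hR h huv hr0 hr1
  · exact N_compare_beta hv hw hP hQ he hue hR h huv hr0 hr1
  · rw [N_symm P Q u v, N_symm P Q u v]
    exact N_compare_beta hu hw hQ hP he (by linarith) (by linarith) h huv hr0 hr1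
  · rw [N_symm P Q u v, N_symm P Q u v]
    exact N_compare_alpha hv hw hQ hP he (by linarith) (by linarith) h huv hr0 hr1

/-- The Ptolemy inequality at scale `r`. -/
def Pt (a b c e g h r : ℝ) : Prop :=
  sinh (r * a) * sinh (r * b) ≤ sinh (r * c) * sinh (r * e) + sinh (r * g) * sinh (r * h)

/-- Main case: `c` exceeds both diagonals. -/
lemma case_big {a b c e g h r : ℝ} (hca : a < c) (hcb : b < c) (hce : c + e < a + b)
    (hgh : g + h < a + b) (hb : b ≤ e + g) (ha : a ≤ e + h) (h1 : Pt a b c e g h 1)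
    (hr0 : 0 < r) (hr1 : r ≤ 1) : Pt a b c e g h r := by
  have hid : ∀ r : ℝ, sinh (r * c) * sinh (r * e) + sinh (r * g) * sinh (r * h)
      - sinh (r * a) * sinh (r * b)
      = 2 * (N ((g + b - e) / 2) ((h + a - e) / 2) ((g - b + e) / 2) ((h - a + e) / 2) r
        - M ((a + b - e + c) / 2) ((a + b - e - c) / 2) e r) := by
    intro r
    set P := (g + b - e) / 2 with hP
    set Q := (h + a - e) / 2 with hQ
    set u := (g - b + e) / 2 with hu
    set v := (h - a + e) / 2 with hv
    set R := (a + b - e + c) / 2 with hR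
    set w := (a + b - e - c) / 2 with hw
    have e1 : sinh (r * c) * sinh (r * e) = sinh (r * (a + b - e)) * sinh (r * e)
        - 2 * M R w e r := by
      rw [show c = R - w by rw [hR, hw]; ring, show a + b - e = R + w by rw [hR, hw]; ring]
      simp only [M, mul_add, mul_sub, sinh_add, sinh_sub]
      ring
    have e2 : sinh (r * g) * sinh (r * h) = sinh (r * (b - e)) * sinh (r * (a - e))
        + 2 * N P Q u v r := by
      rw [show g = P + u by rw [hP, hu]; ring, show b - e = P - u by rw [hP, hu]; ring,
        show h = Q + v by rw [hQ, hv]; ring, show a - e = Q - v by rw [hQ, hv]; ring]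
      simp only [N, mul_add, mul_sub, sinh_add, sinh_sub]
      ring
    have e3 : sinh (r * (a + b - e)) * sinh (r * e) + sinh (r * (b - e)) * sinh (r * (a - e))
        = sinh (r * a) * sinh (r * b) := by
      simp only [mul_add, mul_sub, sinh_add, sinh_sub, cosh_add]
      linear_combination (sinh (r * a) * sinh (r * b)) * cosh_sq (r * e)
    linear_combination e1 + e2 + e3
  have hw : 0 < (a + b - e - c) / 2 := by linarith
  have he : 0 < e := by linarith
  have hc := N_compare (P := (g + b - e) / 2) (Q := (h + a - e) / 2) (u := (g - b + e) / 2)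
    (v := (h - a + e) / 2) (w := (a + b - e - c) / 2) (e := e) (R := (a + b - e + c) / 2)
    (by linarith) (by linarith) hw (by linarith) (by linarith) he (by linarith) (by linarith)
    hr0 hr1
  have i1 := hid 1
  have ir := hid r
  have p1 := M_pos (x := (a + b - e + c) / 2) hw he one_pos
  have pr := M_pos (x := (a + b - e + c) / 2) hw he hr0
  unfold Pt at h1 ⊢
  have j1 : M ((a + b - e + c) / 2) ((a + b - e - c) / 2) e 1 ≤
    N ((g + b - e) / 2) ((h + a - e) / 2) ((g - b + e) / 2) ((h - a + e) / 2) 1 := by linarith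
  have j2 := (mul_le_mul_of_nonneg_right j1 pr.le).trans hc
  rw [mul_comm] at j2
  have j3 := le_of_mul_le_mul_right j2 p1
  linarith

/-- Majorization case. -/
lemma case_major {a b c e g h r : ℝ} (ha : 0 < a) (hb : 0 < b) (hc : 0 ≤ c) (he : 0 ≤ e)
    (hg : 0 ≤ g) (hh : 0 ≤ h) (hce : c + e ≤ a + b) (hgh : g + h ≤ a + b)
    (mc : c ≤ max a b) (me : e ≤ max a b) (mg : g ≤ max a b) (mh : h ≤ max a b)
    (h1 : Pt a b c e g h 1) (hr0 : 0 < r) (hr1 : r ≤ 1) : Pt a b c e g h r := by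
  have aux : ∀ x y : ℝ, 0 ≤ x → 0 ≤ y → x + y ≤ a + b → x ≤ max a b → y ≤ max a b →
      M 0 x y 1 * M 0 a b r ≤ M 0 x y r * M 0 a b 1 := by
    intro x y hx hy hs' mx my
    rcases hx.eq_or_lt with h0 | hx'
    · simp [← h0, M]
    rcases hy.eq_or_lt with h0 | hy'
    · simp [← h0, M]
    apply M_compare hx hy ha hb _ hr0 hr1
    intro s hs
    have : K (s * x) + K (s * y) ≤ K (s * a) + K (s * b) := by
      apply K_major (mul_pos hs ha) (mul_pos hs hb) (mul_pos hs hx') (mul_pos hs hy')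
      · rw [← mul_max_of_nonneg _ _ hs.le]; exact mul_le_mul_of_nonneg_left mx hs.le
      · rw [← mul_max_of_nonneg _ _ hs.le]; exact mul_le_mul_of_nonneg_left my hs.le
      · rw [← mul_add, ← mul_add]; exact mul_le_mul_of_nonneg_left hs' hs.le
    linarith
  have c1 := aux c e hc he hce mc me
  have c2 := aux g h hg hh hgh mg mh
  have p1 := M_pos (x := 0) ha hb one_pos
  have pr := M_pos (x := 0) ha hb hr0
  have e0 : ∀ x y r : ℝ, M 0 x y r = sinh (r * x) * sinh (r * y) := by
    intro x y r; simp [M]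
  unfold Pt at h1 ⊢
  rw [← e0, ← e0, ← e0] at h1 ⊢
  have j2 := mul_le_mul_of_nonneg_right h1 pr.le
  have j3 : M 0 a b r * M 0 a b 1 ≤ (M 0 c e r + M 0 g h r) * M 0 a b 1 := by linarith
  exact le_of_mul_le_mul_right j3 p1

/-- Direct comparison of products. -/
lemma direct {a b c e : ℝ} (ha : 0 ≤ a) (hb : 0 ≤ b) (hm : min a b ≤ e) (hec : e ≤ c)
    (hs : a + b ≤ c + e) : sinh a * sinh b ≤ sinh c * sinh e := by
  have hp : ∀ x y : ℝ, sinh x * sinh y = (cosh (x + y) - cosh (x - y)) / 2 := by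
    intro x y; rw [cosh_add, cosh_sub]; ring
  rcases le_total (max a b) c with h | h
  · have key : ∀ x y : ℝ, 0 ≤ x → 0 ≤ y → x ≤ e → y ≤ c → sinh x * sinh y ≤ sinh c * sinh e := by
      intro x y hx hy hxe hyc
      rw [mul_comm]
      exact mul_le_mul (sinh_le_sinh.2 hyc) (sinh_le_sinh.2 hxe) (sinh_nonneg_iff.2 hx)
        (sinh_nonneg_iff.2 (by linarith))
    rcases min_le_iff.1 hm with h' | h'
    · exact key a b ha hb h' ((le_max_right _ _).trans h)
    · rw [mul_comm]; exact key b a hb ha h' ((le_max_left _ _).trans h)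
  · rw [hp, hp]
    have h1 : cosh (a + b) ≤ cosh (c + e) := by
      rw [cosh_le_cosh, abs_of_nonneg (by linarith), abs_of_nonneg (by linarith)]; exact hs
    have h2 : cosh (c - e) ≤ cosh (a - b) := by
      rw [cosh_le_cosh, abs_of_nonneg (by linarith)]
      rcases le_total a b with k | k
      · rw [max_eq_right k] at h
        rw [min_eq_left k] at hm
        rw [abs_of_nonpos (by linarith)]; linarith
      · rw [max_eq_left k] at h
        rw [min_eq_right k] at hm
        rw [abs_of_nonneg (by linarith)]; linarith
    linarith

/-- If `c + e ≥ a + b`, the inequality holds (scale one), ordered version. -/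
lemma case_sum_aux {a b c e g h : ℝ} (ha : 0 ≤ a) (hb : 0 ≤ b) (he : 0 ≤ e)
    (hg : 0 ≤ g) (hh : 0 ≤ h) (hec : e ≤ c) (hs : a + b ≤ c + e)
    (h1 : b ≤ e + g) (h2 : a ≤ e + h) :
    sinh a * sinh b ≤ sinh c * sinh e + sinh g * sinh h := by
  rcases le_total (min a b) e with hm | hm
  · have := direct ha hb hm hec hs
    have := mul_nonneg (sinh_nonneg_iff.2 hg) (sinh_nonneg_iff.2 hh)
    linarith
  · obtain ⟨m1, m2⟩ := le_min_iff.1 hm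
    have e3 : sinh (a + b - e) * sinh e + sinh (b - e) * sinh (a - e)
        = sinh a * sinh b := by
      simp only [sinh_add, sinh_sub, cosh_add]
      linear_combination (sinh a * sinh b) * cosh_sq e
    have i1 : sinh (a + b - e) * sinh e ≤ sinh c * sinh e :=
      mul_le_mul_of_nonneg_right (sinh_le_sinh.2 (by linarith)) (sinh_nonneg_iff.2 he)
    have i2 : sinh (b - e) * sinh (a - e) ≤ sinh g * sinh h :=
      mul_le_mul (sinh_le_sinh.2 (by linarith)) (sinh_le_sinh.2 (by linarith))
        (sinh_nonneg_iff.2 (by linarith)) (sinh_nonneg_iff.2 hg)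
    linarith

lemma case_sum {a b c e g h r : ℝ} (ha : 0 ≤ a) (hb : 0 ≤ b) (hc : 0 ≤ c) (he : 0 ≤ e)
    (hg : 0 ≤ g) (hh : 0 ≤ h) (hs : a + b ≤ c + e)
    (h1 : b ≤ e + g) (h2 : a ≤ e + h) (h3 : a ≤ c + g) (h4 : b ≤ c + h) (hr : 0 < r) :
    Pt a b c e g h r := by
  have sc : ∀ {x y z : ℝ}, x ≤ y + z → r * x ≤ r * y + r * z := fun h => by
    rw [← mul_add]; exact mul_le_mul_of_nonneg_left h hr.le
  have hs' : r * a + r * b ≤ r * c + r * e := by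
    rw [← mul_add, ← mul_add]; exact mul_le_mul_of_nonneg_left hs hr.le
  have nn : ∀ {x : ℝ}, 0 ≤ x → 0 ≤ r * x := fun h => mul_nonneg hr.le h
  unfold Pt
  rcases le_total e c with h | h
  · exact case_sum_aux (nn ha) (nn hb) (nn he) (nn hg) (nn hh)
      (mul_le_mul_of_nonneg_left h hr.le) hs' (sc h1) (sc h2)
  · have := case_sum_aux (nn ha) (nn hb) (nn hc) (nn hh) (nn hg)
      (mul_le_mul_of_nonneg_left h hr.le) (by linarith) (sc h4) (sc h3)
    linarith

/-- The abstract four point statement: Ptolemy at scale `1` implies Ptolemy at scale `r ≤ 1`. -/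
lemma four_point {a b c e g h r : ℝ} (ha : 0 ≤ a) (hb : 0 ≤ b) (hc : 0 ≤ c) (he : 0 ≤ e)
    (hg : 0 ≤ g) (hh : 0 ≤ h)
    (t1 : b ≤ e + g) (t2 : a ≤ e + h) (t3 : a ≤ c + g) (t4 : b ≤ c + h)
    (h1 : Pt a b c e g h 1) (hr0 : 0 < r) (hr1 : r ≤ 1) : Pt a b c e g h r := by
  have nn : ∀ {x : ℝ}, 0 ≤ x → 0 ≤ sinh (r * x) :=
    fun h => sinh_nonneg_iff.2 (mul_nonneg hr0.le h)
  rcases ha.eq_or_lt with h0 | ha'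
  · have := mul_nonneg (nn hc) (nn he)
    have := mul_nonneg (nn hg) (nn hh)
    simp only [Pt, ← h0, mul_zero, sinh_zero, zero_mul]; linarith
  rcases hb.eq_or_lt with h0 | hb'
  · have := mul_nonneg (nn hc) (nn he)
    have := mul_nonneg (nn hg) (nn hh)
    simp only [Pt, ← h0, mul_zero, sinh_zero]; linarith
  rcases le_or_gt (a + b) (c + e) with hs | hs
  · exact case_sum ha hb hc he hg hh hs t1 t2 t3 t4 hr0
  rcases le_or_gt (a + b) (g + h) with hs2 | hs2
  · have := case_sum (r := r) ha hb hg hh hc he hs2 (by linarith) (by linarith) (by linarith)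
      (by linarith) hr0
    unfold Pt at this ⊢; linarith
  rcases le_or_gt c (max a b) with mc | mc
  swap
  · obtain ⟨m1, m2⟩ := max_lt_iff.1 mc
    exact case_big m1 m2 hs hs2 t1 t2 h1 hr0 hr1
  rcases le_or_gt e (max a b) with me | me
  swap
  · obtain ⟨m1, m2⟩ := max_lt_iff.1 me
    have := case_big (a := a) (b := b) (c := e) (e := c) (g := h) (h := g) (r := r) m1 m2
      (by linarith) (by linarith) (by linarith) (by linarith) (by unfold Pt at h1 ⊢; linarith)
      hr0 hr1
    unfold Pt at this ⊢; linarith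
  rcases le_or_gt g (max a b) with mg | mg
  swap
  · obtain ⟨m1, m2⟩ := max_lt_iff.1 mg
    have := case_big (a := a) (b := b) (c := g) (e := h) (g := c) (h := e) (r := r) m1 m2
      (by linarith) (by linarith) (by linarith) (by linarith) (by unfold Pt at h1 ⊢; linarith)
      hr0 hr1
    unfold Pt at this ⊢; linarith
  rcases le_or_gt h (max a b) with mh | mh
  swap
  · obtain ⟨m1, m2⟩ := max_lt_iff.1 mh
    have := case_big (a := a) (b := b) (c := h) (e := g) (g := e) (h := c) (r := r) m1 m2
      (by linarith) (by linarith) (by linarith) (by linarith) (by unfold Pt at h1 ⊢; linarith)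
      hr0 hr1
    unfold Pt at this ⊢; linarith
  exact case_major ha' hb' hc he hg hh hs.le hs2.le mc me mg mh h1 hr0 hr1

/-- Ptolemy's inequality for `sinh (d/2)` in the upper half-plane. -/
lemma ptolemy_one (z₁ z₂ z₃ z₄ : UpperHalfPlane) :
    sinh (dist z₁ z₃ / 2) * sinh (dist z₂ z₄ / 2) ≤
      sinh (dist z₁ z₂ / 2) * sinh (dist z₃ z₄ / 2) +
        sinh (dist z₂ z₃ / 2) * sinh (dist z₁ z₄ / 2) := by
  have h := EuclideanGeometry.mul_dist_le_mul_dist_add_mul_dist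
    (z₁ : ℂ) (z₂ : ℂ) (z₃ : ℂ) (z₄ : ℂ)
  have p1 := Real.sqrt_pos.2 z₁.im_pos
  have p2 := Real.sqrt_pos.2 z₂.im_pos
  have p3 := Real.sqrt_pos.2 z₃.im_pos
  have p4 := Real.sqrt_pos.2 z₄.im_pos
  simp only [UpperHalfPlane.sinh_half_dist, Real.sqrt_mul (UpperHalfPlane.im_pos _).le]
  set D := 4 * (√z₁.im * √z₂.im * √z₃.im * √z₄.im) with hD
  have hDp : 0 < D := by positivity
  have e : ∀ x y s t s' t' : ℝ, 2 * (s * t) * (2 * (s' * t')) = D →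
      x / (2 * (s * t)) * (y / (2 * (s' * t'))) = x * y / D := by
    intro x y s t s' t' h
    rw [div_mul_div_comm, h]
  rw [e _ _ _ _ _ _ (by rw [hD]; ring), e _ _ _ _ _ _ (by rw [hD]; ring),
    e _ _ _ _ _ _ (by rw [hD]; ring), ← add_div]
  exact div_le_div_of_nonneg_right h hDp.le

end KPtolemy

/-- The κ-Ptolemy inequality for κ = −r², 0 < r ≤ 1, in the hyperbolic plane
(which is CAT(κ) for every κ ≥ −1). -/
theorem hyperbolic_kappa_ptolemy (r : ℝ) (hr0 : 0 < r) (hr1 : r ≤ 1)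
    (z₁ z₂ z₃ z₄ : UpperHalfPlane) :
    Real.sinh (r * dist z₁ z₃ / 2) * Real.sinh (r * dist z₂ z₄ / 2) ≤
      Real.sinh (r * dist z₁ z₂ / 2) * Real.sinh (r * dist z₃ z₄ / 2) +
        Real.sinh (r * dist z₂ z₃ / 2) * Real.sinh (r * dist z₁ z₄ / 2) := by
  have h1 := KPtolemy.ptolemy_one z₁ z₂ z₃ z₄
  have nn : ∀ z w : UpperHalfPlane, 0 ≤ dist z w / 2 := fun z w => by positivity
  have t1 := dist_triangle_left z₂ z₄ z₃
  have t2 := dist_triangle z₁ z₄ z₃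
  have t3 := dist_triangle z₁ z₂ z₃
  have t4 := dist_triangle_left z₂ z₄ z₁
  rw [dist_comm z₃ z₂] at t1
  rw [dist_comm z₄ z₃] at t2
  have := KPtolemy.four_point (r := r) (nn z₁ z₃) (nn z₂ z₄) (nn z₁ z₂) (nn z₃ z₄) (nn z₂ z₃)
    (nn z₁ z₄) (by linarith) (by linarith) (by linarith) (by linarith)
    (by unfold KPtolemy.Pt; simpa only [one_mul] using h1) hr0 hr1
  unfold KPtolemy.Pt at this
  simpa only [mul_div_assoc] using this
end

section
/- The hyperbolic plane is a Ptolemaic metric space: for any four points z₁, z₂, z₃, z₄ in the hyperbolic plane, writing d_ij for the hyperbolic distance between z_i and z_j, one has d₁₃·d₂₄ ≤ d₁₂·d₃₄ + d₂₃·d₁₄. (This is the κ = 0 Ptolemy inequality, valid because the hyperbolic plane is CAT(0).) -/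
/-- Convexity of `x ↦ cosh √x`, in a form adapted to hinges. -/
lemma ptol_sq_le {l m p q a : ℝ} (hl : 0 ≤ l) (hm : 0 ≤ m) (hlm : l + m = 1)
    (h : Real.cosh a = l * Real.cosh p + m * Real.cosh q) :
    l * p ^ 2 + m * q ^ 2 ≤ a ^ 2 := by
  have hX : 0 ≤ l * p ^ 2 + m * q ^ 2 := by positivity
  set c := Real.sqrt (l * p ^ 2 + m * q ^ 2) with hc
  have hc2 : c ^ 2 = l * p ^ 2 + m * q ^ 2 := Real.sq_sqrt hX
  have key : Real.cosh c ≤ l * Real.cosh p + m * Real.cosh q := by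
    refine hasSum_le ?_ (Real.hasSum_cosh c)
      (((Real.hasSum_cosh p).mul_left l).add ((Real.hasSum_cosh q).mul_left m))
    intro n
    have hconv := (convexOn_pow (𝕜 := ℝ) n).2 (x := p ^ 2) (y := q ^ 2)
      (by simp [sq_nonneg]) (by simp [sq_nonneg]) hl hm hlm
    simp only [smul_eq_mul] at hconv
    rw [pow_mul, pow_mul, pow_mul, hc2, ← mul_div_assoc, ← mul_div_assoc, ← add_div]
    gcongr
  rw [← h, Real.cosh_le_cosh] at key
  rw [← hc2]
  exact sq_le_sq.2 key

lemma ptol_hinge {r T S a b : ℝ} (hr : 0 < r) (hT : 0 < T) (hS : 0 < S)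
    (h1 : |r - T| ≤ a) (h2 : a ≤ r + T)
    (h : Real.sinh (T + S) * Real.cosh r = Real.sinh S * Real.cosh a + Real.sinh T * Real.cosh b) :
    (S + T) * (r ^ 2 + S * T) ≤ S * a ^ 2 + T * b ^ 2 := by
  have ha : 0 ≤ a := (abs_nonneg _).trans h1
  have c1 : Real.cosh (r - T) ≤ Real.cosh a := by
    rw [Real.cosh_le_cosh, abs_of_nonneg ha]; exact h1
  have c2 : Real.cosh a ≤ Real.cosh (r + T) := by
    rw [Real.cosh_le_cosh, abs_of_nonneg ha, abs_of_nonneg (by positivity)]; exact h2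
  have sr := Real.sinh_pos_iff.2 hr
  have sT := Real.sinh_pos_iff.2 hT
  have hden : 0 < 2 * (Real.sinh r * Real.sinh T) := by positivity
  obtain ⟨l, hl⟩ : ∃ l, l = (Real.cosh (r + T) - Real.cosh a) / (2 * (Real.sinh r * Real.sinh T)) :=
    ⟨_, rfl⟩
  have hl' : l * (2 * (Real.sinh r * Real.sinh T)) = Real.cosh (r + T) - Real.cosh a := by
    rw [hl]; field_simp
  have l0 : 0 ≤ l := by rw [hl]; exact div_nonneg (by linarith) hden.le
  have l1 : l ≤ 1 := by
    rw [hl, div_le_one hden]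
    rw [Real.cosh_sub] at c1
    rw [Real.cosh_add]
    linarith
  rw [Real.cosh_add] at hl'
  have e1 : Real.cosh a = l * Real.cosh (r - T) + (1 - l) * Real.cosh (r + T) := by
    rw [Real.cosh_sub, Real.cosh_add]; linarith
  have e2 : Real.cosh b = l * Real.cosh (r + S) + (1 - l) * Real.cosh (r - S) := by
    rw [Real.cosh_sub, Real.cosh_add]
    rw [Real.sinh_add] at h
    apply mul_left_cancel₀ sT.ne'
    linear_combination (-1) * h - Real.sinh S * hl'
  have f1 := ptol_sq_le l0 (by linarith) (by ring) e1
  have f2 := ptol_sq_le l0 (by linarith) (by ring) e2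
  have g1 := mul_le_mul_of_nonneg_left f1 hS.le
  have g2 := mul_le_mul_of_nonneg_left f2 hT.le
  nlinarith

/-- The point on the geodesic, via the hyperboloid model. -/
lemma ptol_point (x z : UpperHalfPlane) (α β : ℝ) (hα : 0 < α) (hβ : 0 < β)
    (h : α ^ 2 + β ^ 2 + 2 * α * β * Real.cosh (dist x z) = 1) :
    ∃ m : UpperHalfPlane, ∀ y : UpperHalfPlane, Real.cosh (dist y m) =
      α * Real.cosh (dist y x) + β * Real.cosh (dist y z) := by
  have hx := x.im_pos
  have hz := z.im_pos
  have hX : 0 < α / x.im + β / z.im := by positivity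
  refine ⟨⟨⟨(α * x.re / x.im + β * z.re / z.im) / (α / x.im + β / z.im),
    1 / (α / x.im + β / z.im)⟩, by simpa using hX⟩, fun y => ?_⟩
  have hy := y.im_pos
  rw [UpperHalfPlane.cosh_dist'] at h ⊢
  rw [UpperHalfPlane.cosh_dist', UpperHalfPlane.cosh_dist']
  change ((y.re - (α * x.re / x.im + β * z.re / z.im) / (α / x.im + β / z.im)) ^ 2 + y.im ^ 2
    + (1 / (α / x.im + β / z.im)) ^ 2) / (2 * y.im * (1 / (α / x.im + β / z.im))) = _
  generalize x.re = a at *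
  generalize x.im = b at *
  generalize z.re = c at *
  generalize z.im = d at *
  generalize y.re = u at *
  generalize y.im = v at *
  have h' : (α ^ 2 + β ^ 2) * (b * d) + α * β * ((a - c) ^ 2 + b ^ 2 + d ^ 2) = b * d := by
    field_simp at h
    linear_combination h
  have hN : 0 < α * d + β * b := by positivity
  have e1 : α / b + β / d = (α * d + β * b) / (b * d) := by field_simp
  have e2 : α * a / b + β * c / d = (α * a * d + β * c * b) / (b * d) := by field_simp
  rw [e1, e2]
  field_simp
  linear_combination (-(b * d)) * h'

lemma ptol_cat0 (x z : UpperHalfPlane) (t : ℝ) (ht : 0 < t) (ht1 : t < 1) :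
    ∃ m : UpperHalfPlane, ∀ y : UpperHalfPlane, dist y m ^ 2 ≤
      (1 - t) * dist y x ^ 2 + t * dist y z ^ 2 - t * (1 - t) * dist x z ^ 2 := by
  rcases eq_or_ne x z with rfl | hne
  · exact ⟨x, fun y => by simp only [dist_self]; nlinarith⟩
  have hD : 0 < dist x z := dist_pos.2 hne
  obtain ⟨D, hDd⟩ : ∃ D, D = dist x z := ⟨_, rfl⟩
  rw [← hDd] at hD
  obtain ⟨T, hTd⟩ : ∃ T, T = t * D := ⟨_, rfl⟩
  obtain ⟨S, hSd⟩ : ∃ S, S = (1 - t) * D := ⟨_, rfl⟩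
  have hT : 0 < T := by rw [hTd]; positivity
  have hS : 0 < S := by rw [hSd]; exact mul_pos (by linarith) hD
  have hTS : D = T + S := by rw [hTd, hSd]; ring
  have sT := Real.sinh_pos_iff.2 hT
  have sS := Real.sinh_pos_iff.2 hS
  have sD := Real.sinh_pos_iff.2 hD
  obtain ⟨m, hm⟩ := ptol_point x z (Real.sinh S / Real.sinh D) (Real.sinh T / Real.sinh D)
    (by positivity) (by positivity) (by
      rw [← hDd]
      field_simp
      rw [hTS, Real.sinh_add, Real.cosh_add]
      have := Real.cosh_sq T
      have := Real.cosh_sq S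
      grind)
  refine ⟨m, fun y => ?_⟩
  have hm' : ∀ y, Real.sinh (T + S) * Real.cosh (dist y m) =
      Real.sinh S * Real.cosh (dist y x) + Real.sinh T * Real.cosh (dist y z) := by
    intro y
    rw [hm y, ← hTS]; field_simp
  have hxm : dist x m = T := by
    have h := hm' x
    rw [dist_self, Real.cosh_zero, ← hDd, hTS] at h
    have h2 : Real.cosh (dist x m) = Real.cosh T := by
      rw [hTS] at sD
      apply mul_left_cancel₀ sD.ne'
      rw [h, Real.sinh_add, Real.cosh_add]
      have := Real.cosh_sq T
      grind
    have h3 := Real.cosh_abs (dist x m)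
    have h4 := le_antisymm (Real.cosh_le_cosh.1 h2.le) (Real.cosh_le_cosh.1 h2.ge)
    rwa [abs_of_nonneg dist_nonneg, abs_of_pos hT] at h4
  have hzm : dist z m = S := by
    have h := hm' z
    rw [dist_self, Real.cosh_zero, dist_comm z x, ← hDd, hTS] at h
    have h2 : Real.cosh (dist z m) = Real.cosh S := by
      rw [hTS] at sD
      apply mul_left_cancel₀ sD.ne'
      rw [h, Real.sinh_add, Real.cosh_add]
      have := Real.cosh_sq S
      grind
    have h4 := le_antisymm (Real.cosh_le_cosh.1 h2.le) (Real.cosh_le_cosh.1 h2.ge)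
    rwa [abs_of_nonneg dist_nonneg, abs_of_pos hS] at h4
  rw [← hDd]
  rcases eq_or_ne y m with rfl | hym
  · rw [dist_self, dist_comm y x, dist_comm y z, hxm, hzm, hTd, hSd]
    apply le_of_eq; ring
  have hr : 0 < dist y m := dist_pos.2 hym
  have t1 : |dist y m - T| ≤ dist y x := by
    rw [← hxm, abs_le]
    have := dist_triangle y x m
    have := dist_triangle x y m
    rw [dist_comm x y] at this
    constructor <;> linarith
  have t2 : dist y x ≤ dist y m + T := by
    rw [← hxm, dist_comm x m]; exact dist_triangle _ _ _
  have := ptol_hinge hr hT hS t1 t2 (hm' y)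
  rw [hTd, hSd] at this
  have h5 : D * (dist y m ^ 2) ≤ D * ((1 - t) * dist y x ^ 2 + t * dist y z ^ 2 - t * (1 - t) * D ^ 2) := by
    linarith
  exact le_of_mul_le_mul_left h5 hD

lemma ptol_alg {a b c d p q r s : ℝ} (ha : 0 < a) (hb : 0 < b) (hc : 0 < c) (hd : 0 < d)
    (hp : 0 ≤ p) (hq : q ≤ r + s)
    (hf : r ^ 2 ≤ (1 - a * d / (a * d + b * c)) * a ^ 2 + a * d / (a * d + b * c) * b ^ 2
      - a * d / (a * d + b * c) * (1 - a * d / (a * d + b * c)) * p ^ 2)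
    (hg : s ^ 2 ≤ (1 - a * d / (a * d + b * c)) * d ^ 2 + a * d / (a * d + b * c) * c ^ 2
      - a * d / (a * d + b * c) * (1 - a * d / (a * d + b * c)) * p ^ 2) :
    p * q ≤ a * c + b * d := by
  have hL : 0 < a * d + b * c := by positivity
  have h1 : (1 - a * d / (a * d + b * c)) = b * c / (a * d + b * c) := by field_simp; ring
  rw [h1] at hf hg
  obtain ⟨L, hLd⟩ : ∃ L, L = a * d + b * c := ⟨_, rfl⟩
  obtain ⟨N, hN⟩ : ∃ N, N = (a * c + b * d) * L := ⟨_, rfl⟩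
  have hf' : r ^ 2 * L ^ 2 ≤ a * b * (N - c * d * p ^ 2) := by
    have := mul_le_mul_of_nonneg_right hf (sq_nonneg L)
    refine this.trans (le_of_eq ?_)
    rw [hN, hLd]; field_simp
  have hg' : s ^ 2 * L ^ 2 ≤ c * d * (N - a * b * p ^ 2) := by
    have := mul_le_mul_of_nonneg_right hg (sq_nonneg L)
    refine this.trans (le_of_eq ?_)
    rw [hN, hLd]; field_simp; ring
  rw [← hLd] at hL
  have n1 : 0 ≤ N - c * d * p ^ 2 :=
    nonneg_of_mul_nonneg_right ((by positivity : (0:ℝ) ≤ r ^ 2 * L ^ 2).trans hf') (by positivity)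
  have n2 : 0 ≤ N - a * b * p ^ 2 :=
    nonneg_of_mul_nonneg_right ((by positivity : (0:ℝ) ≤ s ^ 2 * L ^ 2).trans hg') (by positivity)
  have X0 : 0 ≤ a * b * p ^ 2 := by positivity
  have Y0 : 0 ≤ c * d * p ^ 2 := by positivity
  have k1 : p * r * L ≤ (a * b * p ^ 2 + (N - c * d * p ^ 2)) / 2 := by
    refine (abs_le_of_sq_le_sq' ?_ (by linarith)).2
    have := mul_le_mul_of_nonneg_left hf' (sq_nonneg p)
    linarith [sq_nonneg (a * b * p ^ 2 - (N - c * d * p ^ 2))]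
  have k2 : p * s * L ≤ (c * d * p ^ 2 + (N - a * b * p ^ 2)) / 2 := by
    refine (abs_le_of_sq_le_sq' ?_ (by linarith)).2
    have := mul_le_mul_of_nonneg_left hg' (sq_nonneg p)
    linarith [sq_nonneg (c * d * p ^ 2 - (N - a * b * p ^ 2))]
  have k3 : p * q ≤ p * (r + s) := mul_le_mul_of_nonneg_left hq hp
  refine k3.trans (le_of_mul_le_mul_right ?_ hL)
  rw [← hN]; linarith

/-- The hyperbolic plane is a Ptolemaic metric space (the κ = 0 Ptolemy inequality,
valid since it is CAT(0)). -/
theorem hyperbolic_plane_ptolemaic (z₁ z₂ z₃ z₄ : UpperHalfPlane) :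
    dist z₁ z₃ * dist z₂ z₄ ≤ dist z₁ z₂ * dist z₃ z₄ + dist z₂ z₃ * dist z₁ z₄ := by
  rcases eq_or_ne z₁ z₂ with rfl | h12
  · simp [mul_comm]
  rcases eq_or_ne z₂ z₃ with rfl | h23
  · simp
  rcases eq_or_ne z₃ z₄ with rfl | h34
  · simp [mul_comm]
  rcases eq_or_ne z₁ z₄ with rfl | h14
  · simp [dist_comm, mul_comm]
  have ha := dist_pos.2 h12
  have hb := dist_pos.2 h23
  have hc := dist_pos.2 h34
  have hd := dist_pos.2 h14
  have hL : 0 < dist z₁ z₂ * dist z₁ z₄ + dist z₂ z₃ * dist z₃ z₄ := by positivity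
  obtain ⟨m, hm⟩ := ptol_cat0 z₁ z₃
    (dist z₁ z₂ * dist z₁ z₄ / (dist z₁ z₂ * dist z₁ z₄ + dist z₂ z₃ * dist z₃ z₄))
    (by positivity) (by rw [div_lt_one hL]; linarith [mul_pos hb hc])
  have hf := hm z₂
  have hg := hm z₄
  rw [dist_comm z₂ z₁] at hf
  rw [dist_comm z₄ z₁, dist_comm z₄ z₃] at hg
  exact ptol_alg ha hb hc hd dist_nonneg (dist_triangle_right z₂ z₄ m) hf hg
end

section
/- Let n ≥ 1 and let p₁, …, p_{n+2} be unit vectors in the (n+1)-dimensional Euclidean space ℝ^{n+1} (i.e., n+2 points on the unit sphere Sⁿ). Set d_ij = arccos⟪p_i, p_j⟫, the spherical geodesic distance, and let P be the (n+2)×(n+2) matrix with entries P_{ij} = sin²(d_ij/2). Then (−1)^{n+1}·det P ≥ 0; that is, det P vanishes or has sign (−1)^{n+1}. -/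
open RealInnerProductSpace

/-- Higher-dimensional spherical Ptolemy theorem: for n+2 points on the unit sphere Sⁿ,
the determinant of the matrix `(sin²(d_ij/2))`, with `d_ij` the spherical geodesic
distance `arccos ⟪p_i, p_j⟫`, vanishes or has sign (−1)^(n+1). -/
theorem spherical_ptolemy_determinant_sign (n : ℕ) (hn : 1 ≤ n)
    (p : Fin (n + 2) → EuclideanSpace ℝ (Fin (n + 1))) (hp : ∀ i, ‖p i‖ = 1) :
    0 ≤ (-1 : ℝ) ^ (n + 1) *
      (Matrix.of fun i j : Fin (n + 2) =>
        Real.sin (Real.arccos ⟪p i, p j⟫ / 2) ^ 2).det := by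
  let A : Matrix (Fin (n + 2)) (Fin (n + 2)) ℝ :=
    Matrix.of fun i => Fin.cons 1 (fun k => p i k)
  let d : Fin (n + 2) → ℝ := Fin.cons (1 / 2) (fun _ => -(1 / 2))
  have key : (Matrix.of fun i j : Fin (n + 2) =>
      Real.sin (Real.arccos ⟪p i, p j⟫ / 2) ^ 2) = A * Matrix.diagonal d * A.transpose := by
    ext i j
    have h := abs_le.1 (abs_real_inner_le_norm (p i) (p j))
    rw [hp, hp] at h
    have hc : Real.cos (Real.arccos ⟪p i, p j⟫) = ⟪p i, p j⟫ :=
      Real.cos_arccos (by linarith [h.1]) (by linarith [h.2])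
    have hs : Real.sin (Real.arccos ⟪p i, p j⟫ / 2) ^ 2 = 1 / 2 - ⟪p i, p j⟫ / 2 := by
      rw [Real.sin_sq_eq_half_sub, mul_div_cancel₀ _ (two_ne_zero), hc]
    rw [Matrix.of_apply, hs, Matrix.mul_apply, Fin.sum_univ_succ]
    simp only [Matrix.mul_diagonal, Matrix.transpose_apply, A, d, Matrix.of_apply,
      Fin.cons_zero, Fin.cons_succ, PiLp.inner_apply, sub_eq_add_neg, Finset.sum_div,
      ← Finset.sum_neg_distrib]
    congr 1
    · norm_num
    · refine Finset.sum_congr rfl fun k _ => ?_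
      simp
      ring
  rw [key, Matrix.det_mul, Matrix.det_mul, Matrix.det_transpose, Matrix.det_diagonal,
    Fin.prod_univ_succ]
  simp only [d, Fin.cons_zero, Fin.cons_succ, Finset.prod_const, Finset.card_univ,
    Fintype.card_fin]
  have : (-1 : ℝ) ^ (n + 1) * (A.det * (1 / 2 * (-(1 / 2)) ^ (n + 1)) * A.det)
      = A.det ^ 2 * (1 / 2) * (1 / 2) ^ (n + 1) := by
    have e : ((1 : ℝ) / 2) ^ (n + 1) = (-1) ^ (n + 1) * (-(1 / 2)) ^ (n + 1) := by
      rw [← mul_pow]; norm_num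
    rw [e]; ring
  rw [this]
  positivity
end

section
/- Let z₁, z₂, z₃, z₄ be four points in the hyperbolic plane and let d_ij denote the hyperbolic distance between z_i and z_j. Then the determinant of the 4×4 matrix with entries sinh²(d_ij/2) is ≤ 0; that is, it vanishes or has sign (−1)^{n+1} with n = 2. -/
lemma sinh_sq_half_dist_aux (z w : UpperHalfPlane) :
    Real.sinh (dist z w / 2) ^ 2 =
      ((z.re - w.re) ^ 2 + (z.im - w.im) ^ 2) / (4 * (z.im * w.im)) := by
  have h : 0 ≤ z.im * w.im := (mul_pos z.im_pos w.im_pos).le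
  rw [UpperHalfPlane.sinh_half_dist, div_pow, mul_pow, Real.sq_sqrt h, Complex.dist_eq_re_im,
    Real.sq_sqrt (by positivity)]
  norm_num

/-- For four points in the hyperbolic plane, the determinant of the 4×4 matrix with
entries sinh²(d_ij/2) is ≤ 0 (it vanishes or has sign (−1)^(n+1) with n = 2). -/
theorem hyperbolic_ptolemy_determinant_sign (z₁ z₂ z₃ z₄ : UpperHalfPlane) :
    (Matrix.of fun i j : Fin 4 =>
      Real.sinh (dist (![z₁, z₂, z₃, z₄] i) (![z₁, z₂, z₃, z₄] j) / 2) ^ 2).det ≤ 0 := by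
  generalize ![z₁, z₂, z₃, z₄] = z
  let W : Matrix (Fin 4) (Fin 4) ℝ := Matrix.of fun i =>
    ![((z i).re ^ 2 + (z i).im ^ 2) / (2 * (z i).im), 1 / (2 * (z i).im),
      (z i).re / (2 * (z i).im), (z i).im / (2 * (z i).im)]
  let J : Matrix (Fin 4) (Fin 4) ℝ := !![0, 1, 0, 0; 1, 0, 0, 0; 0, 0, -2, 0; 0, 0, 0, -2]
  have hJ : J.det = -4 := by
    simp [J, Matrix.det_succ_row_zero, Fin.sum_univ_succ, Fin.succAbove]
    try norm_num
  have key : (Matrix.of fun i j : Fin 4 => Real.sinh (dist (z i) (z j) / 2) ^ 2)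
      = W * J * W.transpose := by
    ext i j
    have hi := (z i).im_pos.ne'
    have hj := (z j).im_pos.ne'
    rw [Matrix.of_apply, sinh_sq_half_dist_aux]
    simp [W, J, Matrix.mul_apply, Fin.sum_univ_four]
    field_simp
    ring
  rw [key, Matrix.det_mul, Matrix.det_mul, Matrix.det_transpose, hJ]
  nlinarith [sq_nonneg W.det]
end

section
/- For any four points z₁, z₂, z₃, z₄ in the hyperbolic plane, the determinant of the 4×4 matrix with entries cosh(d_ij), where d_ij is the hyperbolic distance between z_i and z_j, is equal to 0. (This is the hyperbolic Cayley–Menger determinant Δ_κ for m = 4 points in the 2-dimensional model space, which vanishes since m ≥ n + 2.) -/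
/-- The hyperbolic Cayley–Menger determinant of four points in the hyperbolic plane
(entries cosh(d_ij)) vanishes, since m = 4 ≥ n + 2 for n = 2. -/
theorem hyperbolic_cayley_menger_four_points (z₁ z₂ z₃ z₄ : UpperHalfPlane) :
    (Matrix.of fun i j : Fin 4 =>
      Real.cosh (dist (![z₁, z₂, z₃, z₄] i) (![z₁, z₂, z₃, z₄] j))).det = 0 := by
  generalize ![z₁, z₂, z₃, z₄] = z
  have h : (Matrix.of fun i j : Fin 4 => Real.cosh (dist (z i) (z j))) =
      (Matrix.of fun i : Fin 4 => ![((z i).re ^ 2 + (z i).im ^ 2) / (2 * (z i).im),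
        1 / (2 * (z i).im), -(z i).re / (z i).im, 0]) *
      (Matrix.of fun k j : Fin 4 => ![1 / (z j).im,
        ((z j).re ^ 2 + (z j).im ^ 2) / (z j).im, (z j).re / (z j).im, 0] k) := by
    ext i j
    have hi := (z i).im_ne_zero
    have hj := (z j).im_ne_zero
    simp only [Matrix.mul_apply, Fin.sum_univ_four, Matrix.of_apply, UpperHalfPlane.cosh_dist']
    simp
    field_simp
    ring
  rw [h, Matrix.det_mul, Matrix.det_eq_zero_of_column_eq_zero 3 (fun i => by simp), zero_mul]
end

section
/- For any three points z₁, z₂, z₃ in the hyperbolic plane, the determinant of the 3×3 matrix with entries cosh(d_ij), where d_ij is the hyperbolic distance between z_i and z_j, is ≥ 0. (This is the hyperbolic Cayley–Menger determinant Δ_κ for m = 3 points, which is 0 or has sign sgn(κ)^{m+1} = (−1)⁴ = +1.) -/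
/-- The hyperbolic Cayley–Menger determinant of three points in the hyperbolic plane
(entries cosh(d_ij)) is nonnegative: it is 0 or has sign sgn(κ)^(m+1) = (−1)⁴ = +1. -/
theorem hyperbolic_cayley_menger_three_points (z₁ z₂ z₃ : UpperHalfPlane) :
    0 ≤ (Matrix.of fun i j : Fin 3 =>
      Real.cosh (dist (![z₁, z₂, z₃] i) (![z₁, z₂, z₃] j))).det := by
  have key : (Matrix.of fun i j : Fin 3 =>
      Real.cosh (dist (![z₁, z₂, z₃] i) (![z₁, z₂, z₃] j))).det =
      (((z₂.re - z₁.re) * ((z₃.re ^ 2 + z₃.im ^ 2) - (z₁.re ^ 2 + z₁.im ^ 2)) -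
        (z₃.re - z₁.re) * ((z₂.re ^ 2 + z₂.im ^ 2) - (z₁.re ^ 2 + z₁.im ^ 2))) /
        (2 * z₁.im * z₂.im * z₃.im)) ^ 2 := by
    have h1 := z₁.im_ne_zero
    have h2 := z₂.im_ne_zero
    have h3 := z₃.im_ne_zero
    rw [Matrix.det_fin_three]
    simp only [Matrix.of_apply, Matrix.cons_val_zero, Matrix.cons_val_one, Matrix.cons_val,
      UpperHalfPlane.cosh_dist']
    generalize z₁.im = a at *
    generalize z₂.im = b at *
    generalize z₃.im = c at *
    field_simp
    ring
  rw [key]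
  exact sq_nonneg _
end

section
/- (Desnanot–Jacobi identity) Let M be an n×n matrix over a commutative ring with n ≥ 3. Denote by M_{∼i,∼j} the (n−1)×(n−1) submatrix of M obtained by deleting the i-th row and the j-th column, and by M_{∼1,n,∼1,n} the (n−2)×(n−2) submatrix obtained by deleting both the first and last rows and both the first and last columns. Then det(M)·det(M_{∼1,n,∼1,n}) = det(M_{∼1,∼1})·det(M_{∼n,∼n}) − det(M_{∼1,∼n})·det(M_{∼n,∼1}). -/
open Matrix in
theorem dj_aux {R : Type*} [CommRing R] {p q : Type*} [Fintype p] [Fintype q]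
    [DecidableEq p] [DecidableEq q] (A : Matrix (p ⊕ q) (p ⊕ q) R) :
    A.det * (adjugate A).toBlocks₁₁.det = A.det ^ Fintype.card p * A.toBlocks₂₂.det := by
  have h := mul_adjugate A
  have key : A * fromBlocks (adjugate A).toBlocks₁₁ 0 (adjugate A).toBlocks₂₁ 1
      = fromBlocks (A.det • (1 : Matrix p p R)) A.toBlocks₁₂ 0 A.toBlocks₂₂ := by
    have h1 : fromBlocks A.toBlocks₁₁ A.toBlocks₁₂ A.toBlocks₂₁ A.toBlocks₂₂ *
        fromBlocks (adjugate A).toBlocks₁₁ (adjugate A).toBlocks₁₂ (adjugate A).toBlocks₂₁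
          (adjugate A).toBlocks₂₂ = A.det • (1 : Matrix (p ⊕ q) (p ⊕ q) R) := by
      rw [fromBlocks_toBlocks, fromBlocks_toBlocks, h]
    rw [fromBlocks_multiply, ← fromBlocks_one, fromBlocks_smul, fromBlocks_inj] at h1
    obtain ⟨h11, -, h21, -⟩ := h1
    conv_lhs => rw [← fromBlocks_toBlocks A]
    rw [fromBlocks_multiply, fromBlocks_toBlocks, h11, h21]
    simp
  have h2 := congrArg det key
  rw [det_mul, det_fromBlocks_zero₁₂, det_fromBlocks_zero₂₁, det_smul] at h2
  simpa using h2

open Matrix in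
theorem dj_block {R : Type*} [CommRing R] {q : Type} [Fintype q]
    [DecidableEq q] (A : Matrix (Fin 2 ⊕ q) (Fin 2 ⊕ q) R) :
    (adjugate A).toBlocks₁₁.det = A.det * A.toBlocks₂₂.det := by
  let X := mvPolynomialX (Fin 2 ⊕ q) (Fin 2 ⊕ q) ℤ
  have hX : (adjugate X).toBlocks₁₁.det = X.det * X.toBlocks₂₂.det := by
    have h := dj_aux X
    have h0 : X.det ≠ 0 := det_mvPolynomialX_ne_zero _ _
    apply mul_left_cancel₀ h0
    rw [h, Fintype.card_fin]
    ring
  let f : MvPolynomial ((Fin 2 ⊕ q) × (Fin 2 ⊕ q)) ℤ →+* R :=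
    MvPolynomial.eval₂Hom (Int.castRingHom R) (fun ij => A ij.1 ij.2)
  have hf : f.mapMatrix X = A := by
    ext i j
    simp [f, X, mvPolynomialX]
  have h := congrArg f hX
  rw [map_mul, RingHom.map_det, RingHom.map_det, RingHom.map_det] at h
  have e1 : f.mapMatrix (adjugate X).toBlocks₁₁ = (f.mapMatrix (adjugate X)).toBlocks₁₁ := rfl
  have e2 : f.mapMatrix X.toBlocks₂₂ = (f.mapMatrix X).toBlocks₂₂ := rfl
  rwa [e1, e2, RingHom.map_adjugate, hf] at h

/-- Desnanot–Jacobi identity for an m×m matrix with m = n + 3 ≥ 3 over a commutative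
ring: `det M · det M_{∼1,m,∼1,m} = det M_{∼1,∼1} · det M_{∼m,∼m} − det M_{∼1,∼m} · det M_{∼m,∼1}`,
where submatrices are obtained by deleting the indicated rows and columns. -/
theorem desnanot_jacobi {R : Type*} [CommRing R] (n : ℕ)
    (M : Matrix (Fin (n + 3)) (Fin (n + 3)) R) :
    M.det *
        (M.submatrix (fun i : Fin (n + 1) => Fin.castSucc i.succ)
          (fun j : Fin (n + 1) => Fin.castSucc j.succ)).det =
      (M.submatrix (Fin.succAbove 0) (Fin.succAbove 0)).det *
          (M.submatrix (Fin.succAbove (Fin.last (n + 2)))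
            (Fin.succAbove (Fin.last (n + 2)))).det -
        (M.submatrix (Fin.succAbove 0) (Fin.succAbove (Fin.last (n + 2)))).det *
          (M.submatrix (Fin.succAbove (Fin.last (n + 2))) (Fin.succAbove 0)).det := by
  let g : Fin 2 ⊕ Fin (n + 1) → Fin (n + 3) :=
    Sum.elim ![0, Fin.last (n + 2)] (fun i => Fin.castSucc i.succ)
  have hg : Function.Injective g := by
    rintro (a | a) (b | b) h
    · fin_cases a <;> fin_cases b <;> simp_all [g, Fin.ext_iff]
    · have := b.2
      have h' := congrArg Fin.val h
      fin_cases a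
      · change 0 = b.val + 1 at h'
        omega
      · change n + 2 = b.val + 1 at h'
        omega
    · have := a.2
      have h' := congrArg Fin.val h
      fin_cases b
      · change a.val + 1 = 0 at h'
        omega
      · change a.val + 1 = n + 2 at h'
        omega
    · simp [g, Fin.ext_iff] at h
      exact congrArg _ (Fin.ext h)
  have hb : Function.Bijective g :=
    (Fintype.bijective_iff_injective_and_card g).2 ⟨hg, by simp; omega⟩
  let e := Equiv.ofBijective g hb
  have h := dj_block (M.submatrix e e)
  rw [Matrix.det_submatrix_equiv_self, Matrix.adjugate_submatrix_equiv_self,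
    Matrix.det_fin_two] at h
  have e2 : (M.submatrix e e).toBlocks₂₂ =
      M.submatrix (fun i : Fin (n + 1) => Fin.castSucc i.succ)
          (fun j : Fin (n + 1) => Fin.castSucc j.succ) := rfl
  rw [e2] at h
  rw [← h]
  have a (i j : Fin 2) : (M.adjugate.submatrix e e).toBlocks₁₁ i j =
      M.adjugate (![0, Fin.last (n + 2)] i) (![0, Fin.last (n + 2)] j) := rfl
  simp only [a, Matrix.adjugate_fin_succ_eq_det_submatrix]
  have hs : ((-1 : R) ^ (n + 2)) * (-1) ^ (n + 2) = 1 := by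
    rw [← mul_pow]; simp
  simp only [Matrix.cons_val_zero, Matrix.cons_val_one, Fin.val_zero, Fin.val_last, add_zero,
    zero_add, pow_zero, one_mul, pow_add _ (n + 2) (n + 2), hs]
  linear_combination (-(M.submatrix (Fin.succAbove 0) (Fin.succAbove (Fin.last (n + 2)))).det *
          (M.submatrix (Fin.succAbove (Fin.last (n + 2))) (Fin.succAbove 0)).det) * hs
end

section
/- Let a₁₂, a₁₃, a₁₄, a₂₃, a₂₄, a₃₄ be real numbers and let M be the symmetric 4×4 real matrix with zero diagonal whose off-diagonal entries are M_{ij} = a_ij² (with a_ij = a_ji). Set u = a₁₃·a₂₄, v = a₁₂·a₃₄, w = a₂₃·a₁₄. Then det M = −(u + v + w)·(−u + v + w)·(u − v + w)·(u + v − w). (Applying this with a_ij = s_κ(d_ij/2) gives the factorization of the determinant γ_κ(p₁, p₂, p₃, p₄) = A·B·C·D used in the proof of the κ-Ptolemy inequality.) -/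
/-- The factorization of the 4×4 determinant with zero diagonal and off-diagonal
entries a_ij², used in the proof of the κ-Ptolemy inequality:
det M = −(u+v+w)(−u+v+w)(u−v+w)(u+v−w) with u = a₁₃a₂₄, v = a₁₂a₃₄, w = a₂₃a₁₄. -/
theorem ptolemy_determinant_factorization (a₁₂ a₁₃ a₁₄ a₂₃ a₂₄ a₃₄ : ℝ) :
    (!![0, a₁₂ ^ 2, a₁₃ ^ 2, a₁₄ ^ 2;
       a₁₂ ^ 2, 0, a₂₃ ^ 2, a₂₄ ^ 2;
       a₁₃ ^ 2, a₂₃ ^ 2, 0, a₃₄ ^ 2;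
       a₁₄ ^ 2, a₂₄ ^ 2, a₃₄ ^ 2, 0] : Matrix (Fin 4) (Fin 4) ℝ).det =
      -((a₁₃ * a₂₄ + a₁₂ * a₃₄ + a₂₃ * a₁₄) *
        (-(a₁₃ * a₂₄) + a₁₂ * a₃₄ + a₂₃ * a₁₄) *
        (a₁₃ * a₂₄ - a₁₂ * a₃₄ + a₂₃ * a₁₄) *
        (a₁₃ * a₂₄ + a₁₂ * a₃₄ - a₂₃ * a₁₄)) := by
  simp [Matrix.det_succ_row_zero, Fin.sum_univ_succ, Fin.succAbove]
  ring
end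

section
/- Let X be a metric space and x₁, x₂, x₃, x₄ ∈ X, and write d_ij = dist(x_i, x_j). If for every t > 0 the inequality sinh(t·d₁₃/2)·sinh(t·d₂₄/2) ≤ sinh(t·d₁₂/2)·sinh(t·d₃₄/2) + sinh(t·d₁₄/2)·sinh(t·d₂₃/2) holds, then d₁₃ + d₂₄ ≤ max(d₁₂ + d₃₄, d₁₄ + d₂₃). (That is, a quadruple satisfying the κ-Ptolemy inequality for all κ < 0, with t = √(−κ), satisfies the 4-point condition.) -/
lemma aux_sinh_lower {u : ℝ} (hu : 1 ≤ u) : Real.exp u / 4 ≤ Real.sinh u := by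
  rw [Real.sinh_eq]
  have h1 := Real.add_one_le_exp u
  have h2 : Real.exp (-u) ≤ 1 := Real.exp_le_one_iff.mpr (by linarith)
  linarith

lemma aux_sinh_upper (u : ℝ) : Real.sinh u ≤ Real.exp u / 2 := by
  rw [Real.sinh_eq]
  have := Real.exp_pos (-u)
  linarith

lemma aux_prod_upper {u v w : ℝ} (hu : 0 ≤ u) (hv : 0 ≤ v) (hw : u + v ≤ w) :
    Real.sinh u * Real.sinh v ≤ Real.exp w / 4 := by
  have h1 : Real.sinh u * Real.sinh v ≤ Real.exp u / 2 * (Real.exp v / 2) :=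
    mul_le_mul (aux_sinh_upper u) (aux_sinh_upper v) (Real.sinh_nonneg_iff.mpr hv) (by positivity)
  have h2 := Real.exp_le_exp.mpr hw
  rw [Real.exp_add] at h2
  linarith

lemma aux_main {a b c d e f M : ℝ} (ha : 0 < a) (hb : 0 < b) (hc : 0 ≤ c) (hd : 0 ≤ d)
    (he : 0 ≤ e) (hf : 0 ≤ f) (h1 : c + d ≤ M) (h2 : e + f ≤ M)
    (h : ∀ t : ℝ, 0 < t → Real.sinh (t * a / 2) * Real.sinh (t * b / 2) ≤
      Real.sinh (t * c / 2) * Real.sinh (t * d / 2) +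
        Real.sinh (t * e / 2) * Real.sinh (t * f / 2)) : a + b ≤ M := by
  by_contra! hlt
  have hs : 0 < a + b - M := by linarith
  obtain ⟨t, ht0, hta, htb, hts⟩ : ∃ t : ℝ, 0 < t ∧ 2 ≤ t * a ∧ 2 ≤ t * b ∧
      16 ≤ t * (a + b - M) := by
    refine ⟨2 / a + 2 / b + 16 / (a + b - M), by positivity, ?_, ?_, ?_⟩
    · rw [← div_le_iff₀ ha]
      have : 0 < 2 / b := by positivity
      have : 0 < 16 / (a + b - M) := by positivity
      linarith
    · rw [← div_le_iff₀ hb]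
      have : 0 < 2 / a := by positivity
      have : 0 < 16 / (a + b - M) := by positivity
      linarith
    · rw [← div_le_iff₀ hs]
      have : 0 < 2 / a := by positivity
      have : 0 < 2 / b := by positivity
      linarith
  have k := h t ht0
  have k1 := aux_prod_upper (u := t * c / 2) (v := t * d / 2) (w := t * M / 2)
    (by positivity) (by positivity) (by nlinarith)
  have k2 := aux_prod_upper (u := t * e / 2) (v := t * f / 2) (w := t * M / 2)
    (by positivity) (by positivity) (by nlinarith)
  have k3 : Real.exp (t * a / 2) / 4 * (Real.exp (t * b / 2) / 4) ≤
      Real.sinh (t * a / 2) * Real.sinh (t * b / 2) :=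
    mul_le_mul (aux_sinh_lower (by linarith)) (aux_sinh_lower (by linarith)) (by positivity)
      (Real.sinh_nonneg_iff.mpr (by positivity))
  have k4 : Real.exp (t * a / 2) * Real.exp (t * b / 2) =
      Real.exp (t * M / 2) * Real.exp (t * (a + b - M) / 2) := by
    rw [← Real.exp_add, ← Real.exp_add]
    congr 1
    ring
  have k5 := Real.add_one_le_exp (t * (a + b - M) / 2)
  have k6 := Real.exp_pos (t * M / 2)
  nlinarith

/-- If a quadruple in a metric space satisfies the κ-Ptolemy inequality for every
κ < 0 (with t = √(−κ)), then it satisfies the 4-point condition. -/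
theorem four_point_condition_of_kappa_ptolemy {X : Type*} [MetricSpace X]
    (x₁ x₂ x₃ x₄ : X)
    (h : ∀ t : ℝ, 0 < t →
      Real.sinh (t * dist x₁ x₃ / 2) * Real.sinh (t * dist x₂ x₄ / 2) ≤
        Real.sinh (t * dist x₁ x₂ / 2) * Real.sinh (t * dist x₃ x₄ / 2) +
          Real.sinh (t * dist x₁ x₄ / 2) * Real.sinh (t * dist x₂ x₃ / 2)) :
    dist x₁ x₃ + dist x₂ x₄ ≤
      max (dist x₁ x₂ + dist x₃ x₄) (dist x₁ x₄ + dist x₂ x₃) := by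
  by_cases h13 : x₁ = x₃
  · subst h13
    apply le_max_of_le_left
    have := dist_triangle_left x₂ x₄ x₁
    simpa using this
  by_cases h24 : x₂ = x₄
  · subst h24
    apply le_max_of_le_right
    have := dist_triangle x₁ x₂ x₃
    simpa using this
  exact aux_main (dist_pos.mpr h13) (dist_pos.mpr h24) dist_nonneg dist_nonneg dist_nonneg
    dist_nonneg (le_max_left _ _) (le_max_right _ _) h
end

section
/- Let X be a metric space such that every 4-tuple of points x₁, x₂, x₃, x₄ ∈ X satisfies the 4-point condition d₁₃ + d₂₄ ≤ max(d₁₂ + d₃₄, d₁₄ + d₂₃), where d_ij = dist(x_i, x_j). Then for every t > 0 and every 4-tuple of points x₁, x₂, x₃, x₄ ∈ X, the inequality sinh(t·d₁₃/2)·sinh(t·d₂₄/2) ≤ sinh(t·d₁₂/2)·sinh(t·d₃₄/2) + sinh(t·d₁₄/2)·sinh(t·d₂₃/2) holds. (That is, a metric space satisfying the 4-point condition satisfies the κ-Ptolemy inequality for every κ < 0, with t = √(−κ).) -/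
theorem aux_ss (x y : ℝ) :
    Real.sinh x * Real.sinh y = (Real.cosh (x + y) - Real.cosh (x - y)) / 2 := by
  rw [Real.cosh_add, Real.cosh_sub]; ring

theorem aux_cc {x y z w : ℝ} (h1 : |x + y| ≤ |z + w|) (h2 : |x - y| ≤ |z - w|) :
    Real.cosh x + Real.cosh y ≤ Real.cosh z + Real.cosh w := by
  have key : ∀ x y : ℝ, Real.cosh x + Real.cosh y
      = 2 * (Real.cosh ((x + y) / 2) * Real.cosh ((x - y) / 2)) := by
    intro x y
    have e1 : x = (x + y) / 2 + (x - y) / 2 := by ring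
    have e2 : y = (x + y) / 2 - (x - y) / 2 := by ring
    conv_lhs => rw [e1]
    conv_lhs => arg 2; rw [e2]
    rw [Real.cosh_add, Real.cosh_sub]; ring
  rw [key x y, key z w]
  have a1 : Real.cosh ((x + y) / 2) ≤ Real.cosh ((z + w) / 2) := by
    rw [Real.cosh_le_cosh, abs_div, abs_div]; gcongr
  have a2 : Real.cosh ((x - y) / 2) ≤ Real.cosh ((z - w) / 2) := by
    rw [Real.cosh_le_cosh, abs_div, abs_div]; gcongr
  have := Real.cosh_pos ((x - y) / 2)
  have := Real.cosh_pos ((z + w) / 2)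
  gcongr

/-- Case where the diagonal sum equals one of the side sums. -/
theorem aux_eq {a b c d e f : ℝ} (hS : a + b = c + d)
    (h1 : |(c - d) + (e - f)| ≤ (e + f) + (a - b))
    (h2 : |(c - d) - (e - f)| ≤ (e + f) - (a - b)) :
    Real.sinh a * Real.sinh b ≤ Real.sinh c * Real.sinh d + Real.sinh e * Real.sinh f := by
  have := aux_cc (h1.trans (le_abs_self _)) (h2.trans (le_abs_self _))
  rw [aux_ss, aux_ss, aux_ss, hS]
  linarith

theorem aux_main_s15 {a b c d e f : ℝ} (ha : 0 ≤ a) (hb : 0 ≤ b)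
    (t1 : a ≤ c + f ∧ c ≤ a + f ∧ f ≤ a + c) (t2 : a ≤ e + d ∧ e ≤ a + d ∧ d ≤ a + e)
    (t3 : b ≤ c + e ∧ c ≤ b + e ∧ e ≤ b + c) (t4 : b ≤ f + d ∧ f ≤ b + d ∧ d ≤ b + f)
    (h1 : a + b ≤ max (c + d) (e + f)) (h2 : c + d ≤ max (a + b) (e + f))
    (h3 : e + f ≤ max (a + b) (c + d)) :
    Real.sinh a * Real.sinh b ≤ Real.sinh c * Real.sinh d + Real.sinh e * Real.sinh f := by
  obtain ⟨_, _, _⟩ := t1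
  obtain ⟨_, _, _⟩ := t2
  obtain ⟨_, _, _⟩ := t3
  obtain ⟨_, _, _⟩ := t4
  by_cases k1 : a + b = c + d
  · apply aux_eq k1 <;> rw [abs_le] <;> constructor <;> linarith
  by_cases k2 : a + b = e + f
  · rw [add_comm]
    apply aux_eq k2 <;> rw [abs_le] <;> constructor <;> linarith
  have hS : c + d = e + f ∧ a + b ≤ c + d := by
    rw [le_max_iff] at h1 h2 h3
    grind
  have hc := aux_cc (x := c - d) (y := e - f) (z := a + b) (w := a - b)
    (le_trans (abs_le.2 ⟨by linarith, by linarith⟩) (le_abs_self _))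
    (le_trans (abs_le.2 ⟨by linarith, by linarith⟩) (le_abs_self _))
  have hm : Real.cosh (a + b) ≤ Real.cosh (c + d) := by
    rw [Real.cosh_le_cosh, abs_of_nonneg (by linarith), abs_of_nonneg (by linarith)]
    exact hS.2
  rw [aux_ss, aux_ss, aux_ss, ← hS.1]
  linarith


/-- A metric space satisfying the 4-point condition satisfies the κ-Ptolemy
inequality for every κ < 0 (with t = √(−κ)). -/
theorem kappa_ptolemy_of_four_point_condition {X : Type*} [MetricSpace X]
    (h : ∀ x₁ x₂ x₃ x₄ : X,
      dist x₁ x₃ + dist x₂ x₄ ≤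
        max (dist x₁ x₂ + dist x₃ x₄) (dist x₁ x₄ + dist x₂ x₃)) :
    ∀ (t : ℝ), 0 < t → ∀ x₁ x₂ x₃ x₄ : X,
      Real.sinh (t * dist x₁ x₃ / 2) * Real.sinh (t * dist x₂ x₄ / 2) ≤
        Real.sinh (t * dist x₁ x₂ / 2) * Real.sinh (t * dist x₃ x₄ / 2) +
          Real.sinh (t * dist x₁ x₄ / 2) * Real.sinh (t * dist x₂ x₃ / 2) := by
  intro t ht x₁ x₂ x₃ x₄
  have tri : ∀ x y z : X, t * dist x z / 2 ≤ t * dist x y / 2 + t * dist y z / 2 := by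
    intro x y z
    have := mul_le_mul_of_nonneg_left (dist_triangle x y z) ht.le
    linarith
  have fp : ∀ x₁ x₂ x₃ x₄ : X, t * dist x₁ x₃ / 2 + t * dist x₂ x₄ / 2 ≤
      max (t * dist x₁ x₂ / 2 + t * dist x₃ x₄ / 2)
        (t * dist x₁ x₄ / 2 + t * dist x₂ x₃ / 2) := by
    intro x₁ x₂ x₃ x₄
    rcases le_max_iff.1 (h x₁ x₂ x₃ x₄) with h' | h'
    · have := mul_le_mul_of_nonneg_left h' ht.le
      exact le_max_of_le_left (by linarith)
    · have := mul_le_mul_of_nonneg_left h' ht.le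
      exact le_max_of_le_right (by linarith)
  have T : ∀ x y z : X, t * dist x z / 2 ≤ t * dist x y / 2 + t * dist y z / 2 ∧
      t * dist x y / 2 ≤ t * dist x z / 2 + t * dist y z / 2 ∧
      t * dist y z / 2 ≤ t * dist x z / 2 + t * dist x y / 2 := by
    intro x y z
    have i1 := tri x y z
    have i2 := tri x z y
    have i3 := tri y x z
    rw [dist_comm z y] at i2
    rw [dist_comm y x] at i3
    exact ⟨i1, i2, by linarith⟩
  have p1 := T x₁ x₂ x₃
  have p2 := T x₁ x₄ x₃
  have p3 := T x₂ x₁ x₄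
  have p4 := T x₂ x₃ x₄
  have q1 := fp x₁ x₂ x₃ x₄
  have q2 := fp x₁ x₃ x₂ x₄
  have q3 := fp x₁ x₃ x₄ x₂
  rw [dist_comm x₄ x₃] at p2
  rw [dist_comm x₂ x₁] at p3
  rw [dist_comm x₃ x₂] at q2
  rw [dist_comm x₄ x₂, dist_comm x₃ x₂] at q3
  exact aux_main_s15 (by positivity) (by positivity) p1 p2 p3 p4 q1
    (by simpa using q2) (by simpa using q3)
end

section
/- Let X be a metric space. The following are equivalent: (i) every 4-tuple of points x₁, x₂, x₃, x₄ ∈ X satisfies the 4-point condition d₁₃ + d₂₄ ≤ max(d₁₂ + d₃₄, d₁₄ + d₂₃), where d_ij = dist(x_i, x_j); (ii) for every t > 0, every 4-tuple of points x₁, x₂, x₃, x₄ ∈ X satisfies sinh(t·d₁₃/2)·sinh(t·d₂₄/2) ≤ sinh(t·d₁₂/2)·sinh(t·d₃₄/2) + sinh(t·d₁₄/2)·sinh(t·d₂₃/2). (This characterizes tree metric spaces as exactly those satisfying the κ-Ptolemy inequality for all κ < 0, with t = √(−κ).) -/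
lemma two_sinh_mul_sinh_aux (x y : ℝ) :
    2 * (Real.sinh x * Real.sinh y) = Real.cosh (x + y) - Real.cosh (x - y) := by
  rw [Real.cosh_add, Real.cosh_sub]; ring

lemma cosh_add_cosh_le_aux (x y u v : ℝ) (h1 : |x + y| ≤ u + v) (h2 : |x - y| ≤ u - v) :
    Real.cosh x + Real.cosh y ≤ Real.cosh u + Real.cosh v := by
  have key : ∀ x y : ℝ, Real.cosh x + Real.cosh y =
      2 * (Real.cosh ((x + y) / 2) * Real.cosh ((x - y) / 2)) := by
    intro x y
    have hx : x = (x + y) / 2 + (x - y) / 2 := by ring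
    have hy : y = (x + y) / 2 - (x - y) / 2 := by ring
    have h1 := Real.cosh_add ((x + y) / 2) ((x - y) / 2)
    have h2 := Real.cosh_sub ((x + y) / 2) ((x - y) / 2)
    rw [← hx] at h1
    rw [← hy] at h2
    linarith
  rw [key, key]
  have a1 : Real.cosh ((x + y) / 2) ≤ Real.cosh ((u + v) / 2) := by
    rw [Real.cosh_le_cosh, abs_div, abs_div]
    have := le_abs_self (u + v)
    gcongr ?_ / _; linarith
  have a2 : Real.cosh ((x - y) / 2) ≤ Real.cosh ((u - v) / 2) := by
    rw [Real.cosh_le_cosh, abs_div, abs_div]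
    have := le_abs_self (u - v)
    gcongr ?_ / _; linarith
  have := mul_le_mul a1 a2 (Real.cosh_pos _).le (Real.cosh_pos _).le
  linarith

/-- The case where the first sum equals the sum `c + d`, the largest. -/
lemma ptolemy_caseA_aux (a b c d e f : ℝ) (h : a + b = c + d)
    (t1 : c ≤ a + f) (t2 : c ≤ b + e) (t3 : d ≤ a + e) (t4 : d ≤ b + f)
    (t5 : a ≤ d + e) (t6 : b ≤ d + f) (t7 : a ≤ c + f) (t8 : b ≤ c + e) :
    Real.sinh a * Real.sinh b ≤ Real.sinh c * Real.sinh d + Real.sinh e * Real.sinh f := by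
  have := cosh_add_cosh_le_aux (c - d) (e - f) (e + f) (a - b)
    (by rw [abs_le]; constructor <;> linarith) (by rw [abs_le]; constructor <;> linarith)
  have h1 := two_sinh_mul_sinh_aux a b
  have h2 := two_sinh_mul_sinh_aux c d
  have h3 := two_sinh_mul_sinh_aux e f
  rw [h] at h1
  linarith

lemma ptolemy_caseB_aux (a b c d e f : ℝ) (h : c + d = e + f) (h' : a + b ≤ c + d)
    (ha : 0 ≤ a) (hb : 0 ≤ b)
    (t1 : c ≤ a + f) (t2 : c ≤ b + e) (t3 : d ≤ a + e) (t4 : d ≤ b + f)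
    (t5 : e ≤ a + d) (t6 : f ≤ b + d) (t7 : f ≤ a + c) (t8 : e ≤ b + c) :
    Real.sinh a * Real.sinh b ≤ Real.sinh c * Real.sinh d + Real.sinh e * Real.sinh f := by
  have := cosh_add_cosh_le_aux (c - d) (e - f) (a + b) (a - b)
    (by rw [abs_le]; constructor <;> linarith) (by rw [abs_le]; constructor <;> linarith)
  have h1 := two_sinh_mul_sinh_aux a b
  have h2 := two_sinh_mul_sinh_aux c d
  have h3 := two_sinh_mul_sinh_aux e f
  have h4 : Real.cosh (a + b) ≤ Real.cosh (c + d) := by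
    rw [Real.cosh_le_cosh, abs_of_nonneg (by linarith), abs_of_nonneg (by linarith)]
    exact h'
  rw [← h] at h3
  linarith

/-- Characterization of the 4-point condition (tree metric spaces) as validity of
the κ-Ptolemy inequality for every κ < 0 (with t = √(−κ)). -/
theorem four_point_condition_iff_kappa_ptolemy {X : Type*} [MetricSpace X] :
    (∀ x₁ x₂ x₃ x₄ : X,
      dist x₁ x₃ + dist x₂ x₄ ≤
        max (dist x₁ x₂ + dist x₃ x₄) (dist x₁ x₄ + dist x₂ x₃)) ↔
    (∀ (t : ℝ), 0 < t → ∀ x₁ x₂ x₃ x₄ : X,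
      Real.sinh (t * dist x₁ x₃ / 2) * Real.sinh (t * dist x₂ x₄ / 2) ≤
        Real.sinh (t * dist x₁ x₂ / 2) * Real.sinh (t * dist x₃ x₄ / 2) +
          Real.sinh (t * dist x₁ x₄ / 2) * Real.sinh (t * dist x₂ x₃ / 2)) := by
  constructor
  · intro H t ht x₁ x₂ x₃ x₄
    have H1 := H x₁ x₂ x₃ x₄
    have H2 := H x₁ x₃ x₂ x₄
    have H3 := H x₁ x₂ x₄ x₃
    have s1 := dist_triangle x₁ x₃ x₂
    have s2 := dist_triangle x₁ x₄ x₂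
    have s3 := dist_triangle x₁ x₂ x₃
    have s4 := dist_triangle x₁ x₄ x₃
    have s5 := dist_triangle x₁ x₂ x₄
    have s6 := dist_triangle x₁ x₃ x₄
    have s7 := dist_triangle x₂ x₁ x₃
    have s8 := dist_triangle x₂ x₄ x₃
    have s9 := dist_triangle x₂ x₁ x₄
    have s10 := dist_triangle x₂ x₃ x₄
    have s11 := dist_triangle x₃ x₁ x₄
    have s12 := dist_triangle x₃ x₂ x₄
    have p1 : 0 ≤ dist x₁ x₃ := dist_nonneg
    have p2 : 0 ≤ dist x₂ x₄ := dist_nonneg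
    simp only [dist_comm x₂ x₁, dist_comm x₃ x₁, dist_comm x₄ x₁, dist_comm x₃ x₂,
      dist_comm x₄ x₂, dist_comm x₄ x₃] at *
    generalize dist x₁ x₃ = a at *
    generalize dist x₂ x₄ = b at *
    generalize dist x₁ x₂ = c at *
    generalize dist x₃ x₄ = d at *
    generalize dist x₁ x₄ = e at *
    generalize dist x₂ x₃ = f at *
    have cases : (a + b = c + d) ∨ (a + b = e + f) ∨ (c + d = e + f ∧ a + b ≤ c + d) := by
      rw [le_max_iff] at H1 H2 H3
      by_cases q1 : a + b = c + d
      · exact Or.inl q1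
      by_cases q2 : a + b = e + f
      · exact Or.inr (Or.inl q2)
      refine Or.inr (Or.inr ?_)
      grind
    have sc : ∀ x y z : ℝ, x ≤ y + z → t * x / 2 ≤ t * y / 2 + t * z / 2 := by
      intro x y z h; nlinarith
    have se : ∀ x y z w : ℝ, x + y = z + w → t * x / 2 + t * y / 2 = t * z / 2 + t * w / 2 := by
      intro x y z w h; linear_combination (t / 2) * h
    rcases cases with h | h | ⟨h, h'⟩
    · apply ptolemy_caseA_aux _ _ _ _ _ _ (se _ _ _ _ h) <;> apply sc <;> linarith
    · rw [add_comm (Real.sinh (t * c / 2) * _)]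
      apply ptolemy_caseA_aux _ _ _ _ _ _ (se _ _ _ _ h) <;> apply sc <;> linarith
    · apply ptolemy_caseB_aux _ _ _ _ _ _ (se _ _ _ _ h) (by nlinarith) (by positivity)
        (by positivity) <;> apply sc <;> linarith
  · intro H x₁ x₂ x₃ x₄
    by_contra! hlt
    have s1 := dist_triangle x₁ x₂ x₃
    have s2 := dist_triangle x₁ x₄ x₃
    have s3 := dist_triangle x₂ x₁ x₄
    have s4 := dist_triangle x₂ x₃ x₄
    have p1 : 0 ≤ dist x₁ x₃ := dist_nonneg
    have p2 : 0 ≤ dist x₂ x₄ := dist_nonneg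
    have p3 : 0 ≤ dist x₁ x₂ := dist_nonneg
    have p4 : 0 ≤ dist x₃ x₄ := dist_nonneg
    have p5 : 0 ≤ dist x₁ x₄ := dist_nonneg
    have p6 : 0 ≤ dist x₂ x₃ := dist_nonneg
    have H1 := fun t ht => H t ht x₁ x₂ x₃ x₄
    clear H
    simp only [dist_comm x₂ x₁, dist_comm x₄ x₃] at *
    generalize dist x₁ x₃ = a at *
    generalize dist x₂ x₄ = b at *
    generalize dist x₁ x₂ = c at *
    generalize dist x₃ x₄ = d at *
    generalize dist x₁ x₄ = e at *
    generalize dist x₂ x₃ = f at *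
    have m1 := le_max_left (c + d) (e + f)
    have m2 := le_max_right (c + d) (e + f)
    generalize max (c + d) (e + f) = M at *
    have hS : 0 < a + b - M := by linarith
    obtain ⟨t, ht, htS⟩ : ∃ t : ℝ, 0 < t ∧ t * (a + b - M) = 12 :=
      ⟨12 / (a + b - M), by positivity, by field_simp⟩
    have h := H1 t ht
    have h1 := two_sinh_mul_sinh_aux (t * a / 2) (t * b / 2)
    have h2 := two_sinh_mul_sinh_aux (t * c / 2) (t * d / 2)
    have h3 := two_sinh_mul_sinh_aux (t * e / 2) (t * f / 2)
    have g2 := Real.one_le_cosh (t * c / 2 - t * d / 2)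
    have g3 := Real.one_le_cosh (t * e / 2 - t * f / 2)
    have cm : ∀ x : ℝ, |x| ≤ M → Real.cosh (t * x / 2) ≤ Real.cosh (t * M / 2) := by
      intro x hx
      rw [Real.cosh_le_cosh, abs_div, abs_div, abs_mul, abs_mul]
      have := le_abs_self M
      gcongr _ * ?_ / _; linarith
    have k1 := cm (c + d) (by rw [abs_le]; constructor <;> linarith)
    have k2 := cm (e + f) (by rw [abs_le]; constructor <;> linarith)
    have k3 := cm (a - b) (by rw [abs_le]; constructor <;> linarith)
    rw [show t * (c + d) / 2 = t * c / 2 + t * d / 2 by ring] at k1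
    rw [show t * (e + f) / 2 = t * e / 2 + t * f / 2 by ring] at k2
    rw [show t * (a - b) / 2 = t * a / 2 - t * b / 2 by ring] at k3
    have fin : Real.cosh (t * a / 2 + t * b / 2) ≤ 3 * Real.cosh (t * M / 2) := by linarith
    rw [show t * a / 2 + t * b / 2 = t * M / 2 + 6 by linarith] at fin
    have hM : 0 ≤ t * M / 2 := by
      have : 0 ≤ M := by linarith
      positivity
    have z1 : Real.exp (-(t * M / 2)) ≤ Real.exp (t * M / 2) := Real.exp_le_exp.2 (by linarith)
    have z2 := Real.exp_pos (-(t * M / 2 + 6))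
    have z3 := Real.add_one_le_exp (6 : ℝ)
    have z4 := Real.exp_pos (t * M / 2)
    rw [Real.cosh_eq, Real.cosh_eq, Real.exp_add] at fin
    nlinarith
end

section
/- Let X be a metric space such that every 4-tuple of points x₁, x₂, x₃, x₄ ∈ X satisfies the 4-point condition d₁₃ + d₂₄ ≤ max(d₁₂ + d₃₄, d₁₄ + d₂₃), where d_ij = dist(x_i, x_j). Then for every κ > 0 and every 4-tuple of points x₁, x₂, x₃, x₄ ∈ X with d₁₂ + d₂₃ + d₃₄ + d₄₁ < 2π/√κ, the inequality sin(√κ·d₁₃/2)·sin(√κ·d₂₄/2) ≤ sin(√κ·d₁₂/2)·sin(√κ·d₃₄/2) + sin(√κ·d₂₃/2)·sin(√κ·d₁₄/2) holds. (That is, a metric space satisfying the 4-point condition satisfies the κ-Ptolemy inequality for every κ > 0 on quadruples of perimeter less than 2·D_κ, where D_κ = π/√κ.) -/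
/-- On `[-d, d]` with `d ≤ π / 2`, `|sin|` is bounded by `sin d`. -/
theorem abs_sin_le_aux {u d : ℝ} (h1 : u ≤ d) (h2 : -d ≤ u) (hd : d ≤ Real.pi / 2) :
    |Real.sin u| ≤ Real.sin d := by
  rw [abs_le]
  constructor
  · rw [← Real.sin_neg]
    exact Real.sin_le_sin_of_le_of_le_pi_div_two (by linarith) (by linarith) h2
  · exact Real.sin_le_sin_of_le_of_le_pi_div_two (by linarith) hd h1

theorem ptolemy_aux {a b c d p q : ℝ} (hb : 0 ≤ b) (hd : 0 ≤ d)
    (hp : 0 ≤ p) (hq : 0 ≤ q) (hS : a + b + c + d < Real.pi)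
    (h1 : p ≤ a + b) (h2 : a ≤ p + b) (h3 : b ≤ p + a)
    (h4 : p ≤ c + d) (h5 : c ≤ p + d) (h6 : d ≤ p + c)
    (h7 : q ≤ a + d) (h8 : a ≤ q + d)
    (h10 : q ≤ b + c) (h12 : c ≤ q + b)
    (h : p + q ≤ a + c) :
    Real.sin p * Real.sin q ≤ Real.sin a * Real.sin c + Real.sin b * Real.sin d := by
  obtain ⟨u, hu⟩ : ∃ u, u = ((p - q) + (a - c)) / 2 := ⟨_, rfl⟩
  obtain ⟨v, hv⟩ : ∃ v, v = ((a - c) - (p - q)) / 2 := ⟨_, rfl⟩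
  have e1 : Real.cos (p - q) = Real.cos (u - v) := by congr 1; linarith
  have e2 : Real.cos (a - c) = Real.cos (u + v) := by congr 1; linarith
  have e3 : Real.cos (a + c) ≤ Real.cos (p + q) :=
    Real.cos_le_cos_of_nonneg_of_le_pi (by linarith) (by linarith) h
  have su : |Real.sin u| ≤ Real.sin d := abs_sin_le_aux (by linarith) (by linarith) (by linarith)
  have sv : |Real.sin v| ≤ Real.sin b := abs_sin_le_aux (by linarith) (by linarith) (by linarith)
  have suv : Real.sin u * Real.sin v ≤ Real.sin d * Real.sin b := by
    refine (le_abs_self _).trans ?_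
    rw [abs_mul]
    exact mul_le_mul su sv (abs_nonneg _) ((abs_nonneg _).trans su)
  rw [Real.cos_sub, Real.cos_sub] at e1
  rw [Real.cos_sub, Real.cos_add] at e2
  rw [Real.cos_add, Real.cos_add] at e3
  linarith

/-- A metric space satisfying the 4-point condition satisfies the κ-Ptolemy
inequality for every κ > 0 on quadruples of perimeter less than 2·D_κ = 2π/√κ. -/
theorem spherical_kappa_ptolemy_of_four_point_condition {X : Type*} [MetricSpace X]
    (h : ∀ x₁ x₂ x₃ x₄ : X,
      dist x₁ x₃ + dist x₂ x₄ ≤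
        max (dist x₁ x₂ + dist x₃ x₄) (dist x₁ x₄ + dist x₂ x₃)) :
    ∀ (κ : ℝ), 0 < κ → ∀ x₁ x₂ x₃ x₄ : X,
      dist x₁ x₂ + dist x₂ x₃ + dist x₃ x₄ + dist x₄ x₁ < 2 * Real.pi / Real.sqrt κ →
      Real.sin (Real.sqrt κ * dist x₁ x₃ / 2) * Real.sin (Real.sqrt κ * dist x₂ x₄ / 2) ≤
        Real.sin (Real.sqrt κ * dist x₁ x₂ / 2) * Real.sin (Real.sqrt κ * dist x₃ x₄ / 2) +
          Real.sin (Real.sqrt κ * dist x₂ x₃ / 2) * Real.sin (Real.sqrt κ * dist x₁ x₄ / 2) := by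
  intro κ hκ x₁ x₂ x₃ x₄ hper
  have hs : 0 < Real.sqrt κ := Real.sqrt_pos.mpr hκ
  rw [lt_div_iff₀ hs] at hper
  obtain ⟨s, hsd⟩ : ∃ s, s = Real.sqrt κ := ⟨_, rfl⟩
  rw [← hsd] at hs hper ⊢
  have h4 := h x₁ x₂ x₃ x₄
  have t1 := dist_triangle x₁ x₂ x₃
  have t2 := dist_triangle x₁ x₃ x₂
  have t3 := dist_triangle x₂ x₁ x₃
  have t4 := dist_triangle x₁ x₄ x₃
  have t5 := dist_triangle x₃ x₁ x₄
  have t6 := dist_triangle x₁ x₃ x₄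
  have t7 := dist_triangle x₂ x₁ x₄
  have t8 := dist_triangle x₁ x₄ x₂
  have t9 := dist_triangle x₁ x₂ x₄
  have t10 := dist_triangle x₂ x₃ x₄
  have t11 := dist_triangle x₂ x₄ x₃
  have t12 := dist_triangle x₃ x₂ x₄
  simp only [dist_comm x₂ x₁, dist_comm x₃ x₁, dist_comm x₄ x₁, dist_comm x₃ x₂,
    dist_comm x₄ x₂, dist_comm x₄ x₃] at *
  have n1 : 0 ≤ dist x₁ x₂ := dist_nonneg
  have n2 : 0 ≤ dist x₁ x₃ := dist_nonneg
  have n3 : 0 ≤ dist x₁ x₄ := dist_nonneg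
  have n4 : 0 ≤ dist x₂ x₃ := dist_nonneg
  have n5 : 0 ≤ dist x₂ x₄ := dist_nonneg
  have n6 : 0 ≤ dist x₃ x₄ := dist_nonneg
  generalize dist x₁ x₂ = a at *
  generalize dist x₁ x₃ = p at *
  generalize dist x₁ x₄ = d at *
  generalize dist x₂ x₃ = b at *
  generalize dist x₂ x₄ = q at *
  generalize dist x₃ x₄ = c at *
  rcases le_max_iff.mp h4 with h' | h'
  · apply ptolemy_aux <;> first | positivity | nlinarith
  · rw [add_comm (Real.sin (s * a / 2) * _)]
    apply ptolemy_aux <;> first | positivity | nlinarith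
end
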